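/- arXiv:2511.23468 — 8 statements merged into one kernel-verified Lean document; each statement's English description precedes it below -/
import Mathlib

section
/- Let n ≥ 1, let k ∈ {1,…,n}, and let φ : K^n → ℝ be a continuous, translation-invariant valuation that is k-strictly monotone. Then the meet-deviation Δ_φ distinguishes points of K^n_k: for all K, L ∈ K^n_k, if Δ_φ(K,L) = 0 then K = L. -/
/-!
The meet-deviation is `(φ K - φ (K ∩ L)) + (φ L - φ (K ∩ L))`, so it suffices to show that
`φ M < φ K` whenever `M ⊊ K`, `K` is a body of dimension at least `k`, and `M` is a convex body of
*any* dimension, or empty.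

Two facts give this. First, `φ` is monotone on all convex bodies: closed `ε`-neighbourhoods are
full-dimensional, so strict monotonicity compares them, and continuity lets `ε` tend to `0`.
Second, for nonempty `M`, a body `K'` of dimension at least `k` with `M ⊆ K' ⊊ K` exists: cut `K` by a hyperplane
strictly separating `M` from a point of `K \ M`. The part on the side of `M` contains a small
homothetic copy of `K` centred at a point of `M`, so it has the dimension of `K`.
-/

open scoped Pointwise
open MeasureTheory

noncomputable section

/-- Euclidean space ℝⁿ. -/
abbrev Euc (n : ℕ) := EuclideanSpace ℝ (Fin n)

/-- A convex body: a nonempty compact convex subset. -/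
def IsConvexBody {n : ℕ} (K : Set (Euc n)) : Prop :=
  K.Nonempty ∧ IsCompact K ∧ Convex ℝ K

/-- Affine dimension of a set. -/
def affDim {n : ℕ} (K : Set (Euc n)) : ℕ :=
  Module.finrank ℝ (affineSpan ℝ K).direction

/-- Membership in `K^n_k`: a convex body of affine dimension at least `k`. -/
def IsBody {n : ℕ} (k : ℕ) (K : Set (Euc n)) : Prop :=
  IsConvexBody K ∧ k ≤ affDim K

/-- A real-valued valuation on convex bodies, extended by `φ ∅ = 0`. -/
def IsValuation {n : ℕ} (φ : Set (Euc n) → ℝ) : Prop :=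
  φ ∅ = 0 ∧ ∀ K L : Set (Euc n), IsConvexBody K → IsConvexBody L →
    Convex ℝ (K ∪ L) → φ (K ∪ L) + φ (K ∩ L) = φ K + φ L

/-- Continuity of a valuation with respect to the Hausdorff distance. -/
def ContinuousVal {n : ℕ} (φ : Set (Euc n) → ℝ) : Prop :=
  ∀ K : Set (Euc n), IsConvexBody K → ∀ ε : ℝ, 0 < ε → ∃ δ : ℝ, 0 < δ ∧
    ∀ L : Set (Euc n), IsConvexBody L → Metric.hausdorffDist K L < δ → |φ L - φ K| < ε

/-- Translation invariance of a valuation. -/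
def TransInvariant {n : ℕ} (φ : Set (Euc n) → ℝ) : Prop :=
  ∀ (K : Set (Euc n)) (x : Euc n), IsConvexBody K → φ (K + ({x} : Set (Euc n))) = φ K

/-- `k`-strict monotonicity: `K ⊊ L` with `K, L ∈ K^n_k ∪ {∅}` implies `φ K < φ L`. -/
def KStrictMono {n : ℕ} (k : ℕ) (φ : Set (Euc n) → ℝ) : Prop :=
  ∀ K L : Set (Euc n), (IsBody k K ∨ K = ∅) → (IsBody k L ∨ L = ∅) →
    K ⊂ L → φ K < φ L

/-- The `φ` meet-deviation `Δ_φ(K,L) = φ K + φ L - 2 φ (K ∩ L)`. -/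
def Dev {n : ℕ} (φ : Set (Euc n) → ℝ) (K L : Set (Euc n)) : ℝ :=
  φ K + φ L - 2 * φ (K ∩ L)

lemma isBody_cthickening {n k : ℕ} (hkn : k ≤ n) {K : Set (Euc n)} (hK : IsConvexBody K)
    {ε : ℝ} (hε : 0 < ε) : IsBody k (Metric.cthickening ε K) := by
  obtain ⟨⟨p, hp⟩, hc, hconv⟩ := hK
  refine ⟨⟨⟨p, Metric.self_subset_cthickening K hp⟩, hc.cthickening, hconv.cthickening ε⟩, ?_⟩
  have hne : (interior (Metric.cthickening ε K)).Nonempty :=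
    ⟨p, interior_mono (Metric.thickening_subset_cthickening ε K)
      (by rw [Metric.isOpen_thickening.interior_eq]; exact Metric.self_subset_thickening hε K hp)⟩
  have htop : affineSpan ℝ (Metric.cthickening ε K) = ⊤ :=
    (hconv.cthickening ε).interior_nonempty_iff_affineSpan_eq_top.1 hne
  unfold affDim
  rw [htop, AffineSubspace.direction_top, finrank_top]
  simpa using hkn

lemma hausdorffDist_cthickening_le {n : ℕ} {K : Set (Euc n)} (hK : IsConvexBody K)
    {ε : ℝ} (hε : 0 < ε) : Metric.hausdorffDist K (Metric.cthickening ε K) ≤ ε := by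
  refine Metric.hausdorffDist_le_of_mem_dist hε.le
    (fun x hx => ⟨x, Metric.self_subset_cthickening K hx, by simpa using hε.le⟩) (fun x hx => ?_)
  rw [hK.2.1.cthickening_eq_biUnion_closedBall hε.le] at hx
  simpa using hx

/-- Continuity extends monotonicity from bodies of dimension at least `k` to all convex bodies. -/
lemma KStrictMono.le_of_subset {n k : ℕ} (hkn : k ≤ n) {φ : Set (Euc n) → ℝ}
    (hcont : ContinuousVal φ) (hsm : KStrictMono k φ) {M N : Set (Euc n)}
    (hM : IsConvexBody M) (hN : IsConvexBody N) (hMN : M ⊆ N) : φ M ≤ φ N := by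
  refine le_of_forall_pos_le_add fun ε hε => ?_
  obtain ⟨δ₁, hδ₁, h₁⟩ := hcont M hM (ε / 2) (by positivity)
  obtain ⟨δ₂, hδ₂, h₂⟩ := hcont N hN (ε / 2) (by positivity)
  obtain ⟨η, hη, hlt⟩ := exists_between (lt_min hδ₁ hδ₂)
  have bM : IsBody k (Metric.cthickening η M) := isBody_cthickening hkn hM hη
  have bN : IsBody k (Metric.cthickening η N) := isBody_cthickening hkn hN hη
  have e₁ := abs_lt.1 (h₁ _ bM.1 ((hausdorffDist_cthickening_le hM hη).trans_lt
    (hlt.trans_le (min_le_left _ _))))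
  have e₂ := abs_lt.1 (h₂ _ bN.1 ((hausdorffDist_cthickening_le hN hη).trans_lt
    (hlt.trans_le (min_le_right _ _))))
  have hle : φ (Metric.cthickening η M) ≤ φ (Metric.cthickening η N) := by
    rcases (Metric.cthickening_subset_of_subset η hMN).eq_or_ssubset with h | h
    · rw [h]
    · exact (hsm _ _ (Or.inl bM) (Or.inl bN) h).le
  linarith [e₁.1, e₂.2]

lemma affDim_le_of_homothety {n : ℕ} {K K' : Set (Euc n)} {p : Euc n} {t : ℝ} (ht : 0 < t)
    (h : ∀ y ∈ K, p + t • (y - p) ∈ K') : affDim K ≤ affDim K' := by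
  unfold affDim
  rw [direction_affineSpan, direction_affineSpan]
  refine Submodule.finrank_mono (Submodule.span_le.2 ?_)
  rintro _ ⟨a, ha, b, hb, rfl⟩
  have hab := Submodule.smul_mem _ t⁻¹ (vsub_mem_vectorSpan ℝ (h a ha) (h b hb))
  have heq : t⁻¹ • ((p + t • (a - p)) -ᵥ (p + t • (b - p))) = a -ᵥ b := by
    simp only [vsub_eq_sub]
    rw [add_sub_add_left_eq_sub, ← smul_sub, smul_smul, inv_mul_cancel₀ ht.ne', one_smul]
    abel
  rw [heq] at hab
  exact hab

/-- A convex body `M ⊊ K` can be enlarged, within `K`, to a proper convex subbody having at least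
the dimension of `K`. -/
lemma exists_isBody_between {n k : ℕ} {M K : Set (Euc n)} (hM : IsConvexBody M)
    (hK : IsBody k K) (hMK : M ⊂ K) : ∃ K', IsBody k K' ∧ M ⊆ K' ∧ K' ⊂ K := by
  obtain ⟨x, hxK, hxM⟩ := Set.exists_of_ssubset hMK
  obtain ⟨f, u, hfu, hux⟩ :=
    geometric_hahn_banach_closed_point hM.2.2 hM.2.1.isClosed hxM
  obtain ⟨p, hp⟩ := hM.1
  have hpK := hMK.subset hp
  have hMK' : M ⊆ K ∩ {y | f y ≤ u} := fun y hy => ⟨hMK.subset hy, (hfu y hy).le⟩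
  refine ⟨K ∩ {y | f y ≤ u}, ⟨⟨⟨p, hMK' hp⟩, ?_, ?_⟩, ?_⟩, hMK', ?_⟩
  · exact hK.1.2.1.inter_right (isClosed_le f.continuous continuous_const)
  · exact hK.1.2.2.inter (convex_halfSpace_le f.toLinearMap.isLinear u)
  · obtain ⟨z, hzK, hz⟩ := hK.1.2.1.exists_isMaxOn hK.1.1 f.continuous.continuousOn
    have hpu := hfu p hp
    have hxz : f x ≤ f z := hz hxK
    -- With this ratio the point of the homothetic copy where `f` is largest lies on `f = u`.
    have hd : 0 < f z - f p := by linarith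
    have ht : 0 < (u - f p) / (f z - f p) := div_pos (by linarith) hd
    have ht1 : (u - f p) / (f z - f p) ≤ 1 := (div_le_one hd).2 (by linarith)
    refine hK.2.trans (affDim_le_of_homothety (p := p) ht fun y hy => ⟨?_, ?_⟩)
    · exact hK.1.2.2.add_smul_sub_mem hpK hy ⟨ht.le, ht1⟩
    · have hyz : f y ≤ f z := hz hy
      have hmul := mul_le_mul_of_nonneg_left (sub_le_sub_right hyz (f p)) ht.le
      rw [div_mul_cancel₀ _ hd.ne'] at hmul
      simp only [Set.mem_ofPred_eq, map_add, map_smul, map_sub, smul_eq_mul]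
      linarith
  · exact ⟨Set.inter_subset_left, fun h => absurd (h hxK).2 (not_le.2 hux)⟩

/-- Strict monotonicity survives when the smaller set is empty or a convex body of arbitrary
dimension. -/
lemma KStrictMono.lt_of_ssubset {n k : ℕ} (hkn : k ≤ n) {φ : Set (Euc n) → ℝ}
    (hcont : ContinuousVal φ) (hsm : KStrictMono k φ) {M K : Set (Euc n)}
    (hM : M.Nonempty → IsConvexBody M) (hK : IsBody k K) (hMK : M ⊂ K) : φ M < φ K := by
  rcases M.eq_empty_or_nonempty with h | h
  · exact hsm M K (Or.inr h) (Or.inl hK) hMK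
  · obtain ⟨K', hK', hMK', hK'K⟩ := exists_isBody_between (hM h) hK hMK
    exact (hsm.le_of_subset hkn hcont (hM h) hK'.1 hMK').trans_lt
      (hsm K' K (Or.inl hK') (Or.inl hK) hK'K)

/-- For a continuous, translation-invariant, `k`-strictly monotone valuation,
the meet-deviation `Δ_φ` distinguishes points of `K^n_k`. -/
theorem meetDev_distinguishes_points (n k : ℕ) (hn : 1 ≤ n) (hk1 : 1 ≤ k) (hkn : k ≤ n)
    (φ : Set (Euc n) → ℝ) (hval : IsValuation φ) (hcont : ContinuousVal φ)
    (htrans : TransInvariant φ) (hsm : KStrictMono k φ) :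
    ∀ K L : Set (Euc n), IsBody k K → IsBody k L → Dev φ K L = 0 → K = L := by
  intro K L hK hL h0
  have hM : (K ∩ L).Nonempty → IsConvexBody (K ∩ L) := fun h =>
    ⟨h, hK.1.2.1.inter hL.1.2.1, hK.1.2.2.inter hL.1.2.2⟩
  have hlt : ∀ A, IsBody k A → K ∩ L ⊂ A → φ (K ∩ L) < φ A := fun A hA h =>
    hsm.lt_of_ssubset hkn hcont hM hA h
  unfold Dev at h0
  rcases (Set.inter_subset_left : K ∩ L ⊆ K).eq_or_ssubset with h1 | h1 <;>
    rcases (Set.inter_subset_right : K ∩ L ⊆ L).eq_or_ssubset with h2 | h2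
  · exact h1.symm.trans h2
  · have := hlt L hL h2
    rw [h1] at h0 this
    linarith
  · have := hlt K hK h1
    rw [h2] at h0 this
    linarith
  · linarith [hlt K hK h1, hlt L hL h2]
end
end

section
/- Let n ≥ 1, let k ∈ {1,…,n}, and let φ : K^n → ℝ be a continuous valuation (with φ(∅) = 0) that is k-strictly monotone. Then φ is monotone on all of K^n, i.e. K ⊆ L implies φ(K) ≤ φ(L) for all K, L ∈ K^n, and φ is nonnegative on K^n. -/
/-!
Adding a small ball to a convex body gives a full-dimensional body, which is a `k`-body for every
`k ≤ n`, converges to the original as the radius shrinks, and depends monotonically on it. So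
`k`-strict monotonicity applies to the thickened bodies, and also to the pair of the empty set and
a thickened body, where `φ ∅ = 0`; both inequalities pass to the limit by continuity.
-/

open scoped Pointwise
open MeasureTheory

noncomputable section

lemma isBody_add_closedBall {n k : ℕ} (hkn : k ≤ n) {K : Set (Euc n)} (hK : IsConvexBody K)
    {r : ℝ} (hr : 0 < r) : IsBody k (K + Metric.closedBall 0 r) := by
  obtain ⟨⟨x, hx⟩, hc, hconv⟩ := hK
  refine ⟨⟨⟨x + 0, Set.add_mem_add hx (Metric.mem_closedBall_self hr.le)⟩,
    hc.add (isCompact_closedBall _ _), hconv.add (convex_closedBall _ _)⟩, ?_⟩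
  have hinterior : (interior (K + Metric.closedBall (0 : Euc n) r)).Nonempty := by
    refine ⟨x, mem_interior.2 ⟨Metric.ball x r, ?_, Metric.isOpen_ball, Metric.mem_ball_self hr⟩⟩
    intro y hy
    refine ⟨x, hx, y - x, ?_, by simp⟩
    rw [mem_closedBall_zero_iff, ← dist_eq_norm]
    exact (Metric.mem_ball.1 hy).le
  have htop : affineSpan ℝ (K + Metric.closedBall (0 : Euc n) r) = ⊤ :=
    affineSpan_eq_top_of_nonempty_interior
      (hinterior.mono (interior_mono (subset_convexHull ℝ _)))
  rw [affDim, htop, AffineSubspace.direction_top, finrank_top, finrank_euclideanSpace_fin]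
  exact hkn

lemma hausdorffDist_add_closedBall_le {n : ℕ} (K : Set (Euc n)) {r : ℝ} (hr : 0 ≤ r) :
    Metric.hausdorffDist K (K + Metric.closedBall 0 r) ≤ r := by
  refine Metric.hausdorffDist_le_of_mem_dist hr ?_ ?_
  · intro x hx
    exact ⟨x, ⟨x, hx, 0, Metric.mem_closedBall_self hr, by simp⟩, by simpa using hr⟩
  · rintro _ ⟨x, hx, y, hy, rfl⟩
    exact ⟨x, hx, by simpa using hy⟩

/-- Continuity of `φ` along the outer parallel bodies of `K`. -/
lemma exists_forall_abs_sub_lt {n : ℕ} {φ : Set (Euc n) → ℝ} (hcont : ContinuousVal φ)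
    {K : Set (Euc n)} (hK : IsConvexBody K) {ε : ℝ} (hε : 0 < ε) :
    ∃ δ : ℝ, 0 < δ ∧ ∀ r : ℝ, 0 < r → r < δ → |φ (K + Metric.closedBall 0 r) - φ K| < ε := by
  obtain ⟨δ, hδ, h⟩ := hcont K hK ε hε
  exact ⟨δ, hδ, fun r hr hrδ => h _ (isBody_add_closedBall (Nat.zero_le n) hK hr).1
    ((hausdorffDist_add_closedBall_le K hr.le).trans_lt hrδ)⟩

/-- A continuous, `k`-strictly monotone valuation is monotone on all of `K^n`
and nonnegative on `K^n`. -/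
theorem kStrictMono_implies_monotone_nonneg (n k : ℕ) (hn : 1 ≤ n) (hk1 : 1 ≤ k) (hkn : k ≤ n)
    (φ : Set (Euc n) → ℝ) (hval : IsValuation φ) (hcont : ContinuousVal φ)
    (hsm : KStrictMono k φ) :
    (∀ K L : Set (Euc n), IsConvexBody K → IsConvexBody L → K ⊆ L → φ K ≤ φ L) ∧
    (∀ K : Set (Euc n), IsConvexBody K → 0 ≤ φ K) := by
  constructor
  · intro K L hK hL hKL
    refine le_of_forall_pos_lt_add fun ε hε => ?_
    obtain ⟨δ₁, hδ₁, h₁⟩ := exists_forall_abs_sub_lt hcont hK (half_pos hε)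
    obtain ⟨δ₂, hδ₂, h₂⟩ := exists_forall_abs_sub_lt hcont hL (half_pos hε)
    obtain ⟨r, hr, hrδ⟩ := exists_between (lt_min hδ₁ hδ₂)
    have h1 := abs_lt.1 (h₁ r hr (hrδ.trans_le (min_le_left _ _)))
    have h2 := abs_lt.1 (h₂ r hr (hrδ.trans_le (min_le_right _ _)))
    have hle : φ (K + Metric.closedBall 0 r) ≤ φ (L + Metric.closedBall 0 r) := by
      rcases (Set.add_subset_add_right hKL :
        K + Metric.closedBall 0 r ⊆ L + Metric.closedBall 0 r).eq_or_ssubset with h | h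
      · rw [h]
      · exact (hsm _ _ (Or.inl (isBody_add_closedBall hkn hK hr))
          (Or.inl (isBody_add_closedBall hkn hL hr)) h).le
    linarith [h1.1, h2.2]
  · intro K hK
    refine le_of_forall_pos_lt_add fun ε hε => ?_
    obtain ⟨δ, hδ, h⟩ := exists_forall_abs_sub_lt hcont hK hε
    obtain ⟨r, hr, hrδ⟩ := exists_between hδ
    have h1 := abs_lt.1 (h r hr hrδ)
    have hb := isBody_add_closedBall hkn hK hr
    have h2 := hsm ∅ _ (Or.inr rfl) (Or.inl hb) (Set.empty_ssubset.2 hb.1.1)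
    rw [hval.1] at h2
    linarith [h1.2]
end
end

section
/- Let n ≥ 1, k ∈ {1,…,n}, and let φ : K^n → ℝ be a monotone and k-strictly monotone valuation (with φ(∅) = 0). Let γ : [a,b] → K^n_k (a < b) be a map such that Δ_φ satisfies the triangle inequality on the image γ([a,b]) and such that γ is continuous with respect to Δ_φ, i.e. for every t ∈ [a,b] and ε > 0 there is δ > 0 with Δ_φ(γ(s), γ(t)) < ε whenever |s − t| < δ. Then there exists a partition a = p_0 < p_1 < ⋯ < p_N = b of [a,b] such that γ(p_{i−1}) ∩ γ(p_i) ≠ ∅ for every i ∈ {1,…,N}. -/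
/-!
By strict monotonicity (compared with `∅`) every `φ (γ t)` is positive. If `γ s` and `γ t` were
disjoint, then `Dev φ (γ s) (γ t) = φ (γ s) + φ (γ t) > φ (γ t)`. Continuity at `t` with
`ε = φ (γ t)` therefore shows that `γ s` meets `γ t` for all `s` within some `δ(t) > 0` of `t`.
Such a pointwise local condition gives a finite chain from `a` to `b` by a supremum argument
(`exists_chain`, a form of Cousin's lemma): the supremum of the points reachable from `a` by chains
is itself reachable, and equals `b`.
-/

/-- `x` is the endpoint of a finite strictly increasing sequence starting at `a` whose consecutive
terms are related by `R`. The one-point sequence (`N = 0`, `x = a`) is allowed. -/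
def Reaches (R : ℝ → ℝ → Prop) (a x : ℝ) : Prop :=
  ∃ (N : ℕ) (p : ℕ → ℝ), p 0 = a ∧ p N = x ∧
    (∀ i < N, p i < p (i + 1)) ∧ (∀ i < N, R (p i) (p (i + 1)))

lemma Reaches.refl (R : ℝ → ℝ → Prop) (a : ℝ) : Reaches R a a :=
  ⟨0, fun _ => a, rfl, rfl, by simp, by simp⟩

lemma Reaches.step {R : ℝ → ℝ → Prop} {a x y : ℝ} (h : Reaches R a x) (hxy : x < y)
    (hR : R x y) : Reaches R a y := by
  obtain ⟨N, p, h0, hN, hlt, hr⟩ := h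
  refine ⟨N + 1, fun i => if i ≤ N then p i else y, by simp [h0], by simp, ?_, ?_⟩
  all_goals
    intro i hi
    rcases Nat.lt_succ_iff_lt_or_eq.mp hi with h | rfl
    · have h1 : i ≤ N := h.le
      have h2 : i + 1 ≤ N := h
      simp only [h1, h2, if_true]
      first | exact hlt i h | exact hr i h
    · simpa [hN]

/-- Cousin's lemma for chains: if each `t ∈ [a, b]` is related, in both orders, to all points of
`[a, b]` close to `t`, then `b` is reachable from `a`. -/
lemma exists_chain {R : ℝ → ℝ → Prop} {a b : ℝ} (hab : a < b)
    (hR : ∀ t ∈ Set.Icc a b, ∃ δ : ℝ, 0 < δ ∧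
      ∀ s ∈ Set.Icc a b, |s - t| < δ → R s t ∧ R t s) : Reaches R a b := by
  set S : Set ℝ := {x | x ∈ Set.Icc a b ∧ Reaches R a x} with hS
  have haS : a ∈ S := ⟨⟨le_rfl, hab.le⟩, Reaches.refl R a⟩
  have hbdd : BddAbove S := ⟨b, fun x hx => hx.1.2⟩
  have hc : sSup S ∈ Set.Icc a b := ⟨le_csSup hbdd haS, csSup_le ⟨a, haS⟩ fun x hx => hx.1.2⟩
  set c := sSup S with hcdef
  obtain ⟨δ, hδ, hnear⟩ := hR c hc
  have hreach : Reaches R a c := by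
    obtain ⟨x, hx, hxc⟩ := exists_lt_of_lt_csSup ⟨a, haS⟩ (show c - δ < sSup S by linarith)
    have hle : x ≤ c := le_csSup hbdd hx
    rcases hle.eq_or_lt with h | h
    · exact h ▸ hx.2
    · exact hx.2.step h (hnear x hx.1 (by rw [abs_lt]; constructor <;> linarith)).1
  rcases hc.2.eq_or_lt with h | h
  · exact h ▸ hreach
  · exfalso
    -- A chain ending at `c < b` extends past `c`, which contradicts the choice of `c`.
    have hlt : c < min b (c + δ / 2) := lt_min h (by linarith)
    have hmem : min b (c + δ / 2) ∈ Set.Icc a b := ⟨hc.1.trans hlt.le, min_le_left _ _⟩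
    have hle : min b (c + δ / 2) ≤ c + δ / 2 := min_le_right _ _
    have hyS : min b (c + δ / 2) ∈ S :=
      ⟨hmem, hreach.step hlt (hnear _ hmem (by rw [abs_lt]; constructor <;> linarith)).2⟩
    exact absurd (le_csSup hbdd hyS) (not_le.mpr hlt)


open scoped Pointwise
open MeasureTheory

noncomputable section

def MonotoneVal {n : ℕ} (φ : Set (Euc n) → ℝ) : Prop :=
  ∀ K L : Set (Euc n), IsConvexBody K → IsConvexBody L → K ⊆ L → φ K ≤ φ L

/-- If `Δ_φ` restricts to a triangle inequality on the image of a
`Δ_φ`-continuous path `γ : [a,b] → K^n_k`, then some partition of `[a,b]` has all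
consecutive images intersecting. -/
theorem exists_partition_consecutive_intersect (n k : ℕ) (hn : 1 ≤ n) (hk1 : 1 ≤ k) (hkn : k ≤ n)
    (φ : Set (Euc n) → ℝ) (hval : IsValuation φ) (hmono : MonotoneVal φ)
    (hsm : KStrictMono k φ)
    (a b : ℝ) (hab : a < b) (γ : ℝ → Set (Euc n))
    (hγk : ∀ t ∈ Set.Icc a b, IsBody k (γ t))
    (htri : ∀ t ∈ Set.Icc a b, ∀ s ∈ Set.Icc a b, ∀ r ∈ Set.Icc a b,
      Dev φ (γ t) (γ r) ≤ Dev φ (γ t) (γ s) + Dev φ (γ s) (γ r))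
    (hcont : ∀ t ∈ Set.Icc a b, ∀ ε : ℝ, 0 < ε → ∃ δ : ℝ, 0 < δ ∧
      ∀ s ∈ Set.Icc a b, |s - t| < δ → Dev φ (γ s) (γ t) < ε) :
    ∃ (N : ℕ) (p : ℕ → ℝ), 0 < N ∧ p 0 = a ∧ p N = b ∧
      (∀ i < N, p i < p (i + 1)) ∧
      (∀ i < N, (γ (p i) ∩ γ (p (i + 1))).Nonempty) := by
  have hpos : ∀ t ∈ Set.Icc a b, 0 < φ (γ t) := fun t ht => by
    have := hsm ∅ (γ t) (Or.inr rfl) (Or.inl (hγk t ht))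
      (Set.empty_ssubset.mpr (hγk t ht).1.1)
    rwa [hval.1] at this
  obtain ⟨N, p, h0, hN, hlt, hr⟩ :=
    exists_chain (R := fun s t => (γ s ∩ γ t).Nonempty) hab (fun t ht => by
      obtain ⟨δ, hδ, h⟩ := hcont t ht (φ (γ t)) (hpos t ht)
      refine ⟨δ, hδ, fun s hs hst => ?_⟩
      have hne : (γ s ∩ γ t).Nonempty := by
        by_contra hemp
        rw [Set.not_nonempty_iff_eq_empty] at hemp
        have h1 := h s hs hst
        rw [Dev, hemp, hval.1] at h1
        linarith [hpos s hs]
      exact ⟨hne, Set.inter_comm (γ s) (γ t) ▸ hne⟩)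
  refine ⟨N, p, Nat.pos_of_ne_zero ?_, h0, hN, hlt, hr⟩
  rintro rfl
  exact hab.ne (h0.symm.trans hN)
end
end

section
/- Let n ≥ 1 and let φ : K^n → ℝ be a nonnegative, translation-invariant valuation (with φ(∅) = 0). Suppose there exist nonnegative functions φ_2, …, φ_n : K^n → ℝ with φ = Σ_{i=2}^n φ_i and φ_i(tK) = t^i φ_i(K) for all K ∈ K^n and t ≥ 0 (i.e. φ has no 0- or 1-homogeneous component). Then φ admits spheropolyhedra of prescribed length with arbitrarily small value: for all p, q ∈ ℝ^n and every ε > 0 there exists r > 0 such that φ([p,q] + rB) < ε, where [p,q] is the segment from p to q and B is the closed unit ball. -/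
/-!
Write `S_N` for the spheropolyhedron `[0, N v] + B` with `v = q - p`. Cutting `S_{m+1}` into
`[0, m v] + B` and `[m v, (m+1) v] + B`, whose intersection is the ball `m v + B`, the valuation
property, translation invariance and `φ(B) ≥ 0` give `φ(S_{m+1}) ≤ φ(S_m) + φ(S_1)`, so
`φ(S_N) ≤ N φ(S_1)`: linear growth. On the other hand all components of `φ` have degree at least
`2` and are nonnegative, so `φ(N⁻¹ S_N) ≤ N⁻² φ(S_N) ≤ N⁻¹ φ(S_1)`. Since `[p,q] + N⁻¹ B` is a
translate of `N⁻¹ S_N`, taking `r = N⁻¹` with `N` large proves the claim.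
-/

open scoped Pointwise
open MeasureTheory

noncomputable section

/-- The spheropolyhedron `[a v, b v] + B`, with the segment parametrized by `s ↦ s v` on
`[a, b]`. -/
def capsule {n : ℕ} (v : Euc n) (a b : ℝ) : Set (Euc n) :=
  (fun s : ℝ => s • v) '' Set.Icc a b + Metric.closedBall (0 : Euc n) 1

lemma mem_capsule {n : ℕ} {v x : Euc n} {a b : ℝ} :
    x ∈ capsule v a b ↔ ∃ s ∈ Set.Icc a b, ‖x - s • v‖ ≤ 1 := by
  unfold capsule
  rw [Set.mem_add]
  constructor
  · rintro ⟨_, ⟨s, hs, rfl⟩, y, hy, rfl⟩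
    exact ⟨s, hs, by simpa using hy⟩
  · rintro ⟨s, hs, h⟩
    exact ⟨s • v, ⟨s, hs, rfl⟩, x - s • v, by simpa using h, by simp⟩

lemma isConvexBody_capsule {n : ℕ} (v : Euc n) {a b : ℝ} (hab : a ≤ b) :
    IsConvexBody (capsule v a b) := by
  refine ⟨?_, ?_, ?_⟩
  · exact ((Set.nonempty_Icc.2 hab).image _).add ⟨0, by simp⟩
  · exact (isCompact_Icc.image (by fun_prop)).add (isCompact_closedBall _ _)
  · exact ((convex_Icc a b).is_linear_image
      (LinearMap.toSpanSingleton ℝ (Euc n) v).isLinear).add (convex_closedBall _ _)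

lemma capsule_add_singleton {n : ℕ} (v : Euc n) (a b c : ℝ) :
    capsule v a b + {c • v} = capsule v (a + c) (b + c) := by
  ext x
  simp only [Set.add_singleton, Set.mem_image, mem_capsule]
  constructor
  · rintro ⟨y, ⟨s, hs, h⟩, rfl⟩
    refine ⟨s + c, ⟨by linarith [hs.1], by linarith [hs.2]⟩, ?_⟩
    rwa [add_smul, add_sub_add_right_eq_sub]
  · rintro ⟨s, hs, h⟩
    refine ⟨x - c • v, ⟨s - c, ⟨by linarith [hs.1], by linarith [hs.2]⟩, ?_⟩, by simp⟩
    rwa [sub_smul, sub_sub_sub_cancel_right]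

lemma capsule_union {n : ℕ} (v : Euc n) {a b c : ℝ} (hab : a ≤ b) (hbc : b ≤ c) :
    capsule v a b ∪ capsule v b c = capsule v a c := by
  unfold capsule
  rw [← Set.union_add, ← Set.image_union, Set.Icc_union_Icc_eq_Icc hab hbc]

/-- If `x` is within distance `1` of points `s v`, `t v` with `s ≤ b ≤ t`, then by convexity of
the ball around `x` it is within distance `1` of `b v`. -/
lemma capsule_inter {n : ℕ} (v : Euc n) {a b c : ℝ} (hab : a ≤ b) (hbc : b ≤ c) :
    capsule v a b ∩ capsule v b c = capsule v b b := by
  ext x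
  simp only [Set.mem_inter_iff, mem_capsule]
  constructor
  · rintro ⟨⟨s, hs, h1⟩, t, ht, h2⟩
    refine ⟨b, ⟨le_rfl, le_rfl⟩, ?_⟩
    have hconv : Convex ℝ ((fun u : ℝ => u • v) ⁻¹' Metric.closedBall x 1) :=
      (convex_closedBall x 1).is_linear_preimage
        (LinearMap.toSpanSingleton ℝ (Euc n) v).isLinear
    have := hconv.ordConnected.out (x := s) (y := t)
      (by simpa [dist_eq_norm, norm_sub_rev] using h1)
      (by simpa [dist_eq_norm, norm_sub_rev] using h2) ⟨hs.2, ht.1⟩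
    simpa [dist_eq_norm, norm_sub_rev] using this
  · rintro ⟨s, hs, h⟩
    exact ⟨⟨s, ⟨hab.trans hs.1, hs.2⟩, h⟩, s, ⟨hs.1, hs.2.trans hbc⟩, h⟩

lemma capsule_le {n : ℕ} {φ : Set (Euc n) → ℝ} (hval : IsValuation φ)
    (hnonneg : ∀ K : Set (Euc n), IsConvexBody K → 0 ≤ φ K) (htrans : TransInvariant φ)
    (v : Euc n) (m : ℕ) :
    φ (capsule v 0 (m + 1)) ≤ (m + 1) * φ (capsule v 0 1) := by
  induction m with
  | zero => simp
  | succ m ih =>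
    have h0 : (0 : ℝ) ≤ (m : ℝ) + 1 := by positivity
    have h1 : (m : ℝ) + 1 ≤ (m : ℝ) + 1 + 1 := by linarith
    have hcut := hval.2 _ _ (isConvexBody_capsule v h0) (isConvexBody_capsule v h1)
      (by rw [capsule_union v h0 h1]; exact (isConvexBody_capsule v (h0.trans h1)).2.2)
    rw [capsule_union v h0 h1, capsule_inter v h0 h1] at hcut
    have hshift := htrans (capsule v 0 1) (((m : ℝ) + 1) • v)
      (isConvexBody_capsule v zero_le_one)
    rw [capsule_add_singleton, zero_add, add_comm (1 : ℝ)] at hshift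
    have hball := hnonneg _ (isConvexBody_capsule v (le_refl ((m : ℝ) + 1)))
    push_cast
    linarith

lemma segment_add_smul_ball {n : ℕ} (p q : Euc n) {t : ℝ} (ht : 0 < t) :
    segment ℝ p q + t⁻¹ • Metric.closedBall (0 : Euc n) 1
      = t⁻¹ • capsule (q - p) 0 t + {p} := by
  have hseg : segment ℝ p q
      = t⁻¹ • ((fun s : ℝ => s • (q - p)) '' Set.Icc 0 t) + {p} := by
    rw [segment_eq_image']
    ext x
    simp only [Set.add_singleton, Set.mem_image, Set.mem_smul_set]
    constructor
    · rintro ⟨θ, hθ, rfl⟩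
      refine ⟨θ • (q - p), ⟨(t * θ) • (q - p), ⟨t * θ, ⟨?_, ?_⟩, rfl⟩, ?_⟩, add_comm _ _⟩
      · exact mul_nonneg ht.le hθ.1
      · nlinarith [hθ.2]
      · rw [smul_smul, inv_mul_cancel_left₀ ht.ne']
    · rintro ⟨_, ⟨_, ⟨s, hs, rfl⟩, rfl⟩, rfl⟩
      refine ⟨t⁻¹ * s, ⟨mul_nonneg (inv_nonneg.2 ht.le) hs.1, ?_⟩, ?_⟩
      · rw [inv_mul_le_iff₀ ht, mul_one]; exact hs.2
      · rw [mul_smul, add_comm]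
  rw [hseg, capsule, smul_add, add_right_comm]

/-- A nonnegative, translation-invariant valuation with no `0`- or
`1`-homogeneous component admits spheropolyhedra `[p,q] + rB` of prescribed length with
arbitrarily small value. -/
theorem spheropolyhedra_small_value (n : ℕ) (hn : 1 ≤ n) (φ : Set (Euc n) → ℝ)
    (hval : IsValuation φ)
    (hnonneg : ∀ K : Set (Euc n), IsConvexBody K → 0 ≤ φ K)
    (htrans : TransInvariant φ)
    (φi : ℕ → Set (Euc n) → ℝ)
    (hdecomp : ∀ K : Set (Euc n), IsConvexBody K → φ K = ∑ i ∈ Finset.Icc 2 n, φi i K)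
    (hφinonneg : ∀ i ∈ Finset.Icc 2 n, ∀ K : Set (Euc n), IsConvexBody K → 0 ≤ φi i K)
    (hhomog : ∀ i ∈ Finset.Icc 2 n, ∀ K : Set (Euc n), IsConvexBody K →
      ∀ t : ℝ, 0 ≤ t → φi i (t • K) = t ^ i * φi i K) :
    ∀ (p q : Euc n) (ε : ℝ), 0 < ε → ∃ r : ℝ, 0 < r ∧
      φ (segment ℝ p q + r • Metric.closedBall (0 : Euc n) 1) < ε := by
  intro p q ε hε
  obtain ⟨m, hm⟩ := exists_nat_gt (φ (capsule (q - p) 0 1) / ε)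
  have hN : (0 : ℝ) < (m : ℝ) + 1 := by positivity
  refine ⟨((m : ℝ) + 1)⁻¹, inv_pos.2 hN, ?_⟩
  set t : ℝ := (m : ℝ) + 1 with ht
  have hS : IsConvexBody (capsule (q - p) 0 t) := isConvexBody_capsule _ hN.le
  have hS' : IsConvexBody (t⁻¹ • capsule (q - p) 0 t) :=
    ⟨hS.1.smul_set, hS.2.1.smul _, hS.2.2.smul _⟩
  rw [segment_add_smul_ball p q hN, htrans _ p hS']
  have hscale : φ (t⁻¹ • capsule (q - p) 0 t) ≤ t⁻¹ ^ 2 * φ (capsule (q - p) 0 t) := by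
    rw [hdecomp _ hS', hdecomp _ hS, Finset.mul_sum]
    refine Finset.sum_le_sum fun i hi => ?_
    rw [hhomog i hi _ hS _ (inv_nonneg.2 hN.le)]
    refine mul_le_mul_of_nonneg_right ?_ (hφinonneg i hi _ hS)
    exact pow_le_pow_of_le_one (inv_nonneg.2 hN.le)
      (inv_le_one_of_one_le₀ (by rw [ht]; linarith [Nat.cast_nonneg (α := ℝ) m]))
      (Finset.mem_Icc.1 hi).1
  calc φ (t⁻¹ • capsule (q - p) 0 t)
      ≤ t⁻¹ ^ 2 * (t * φ (capsule (q - p) 0 1)) :=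
        hscale.trans (mul_le_mul_of_nonneg_left
          (capsule_le hval hnonneg htrans (q - p) m) (by positivity))
    _ = φ (capsule (q - p) 0 1) / t := by field_simp
    _ < ε := by
        rw [div_lt_iff₀ hN]
        rw [div_lt_iff₀ hε] at hm
        nlinarith
end
end

section
/- Let n ≥ 1 and k ∈ {1,…,n}. (i) If φ : K^n → ℝ is a continuous, translation-invariant valuation that is 1-homogeneous (φ(tK) = tφ(K) for all t ≥ 0) and k-strictly monotone, then φ is 1-strictly monotone. (ii) If n ≥ 2 and φ : K^n → ℝ is a continuous, translation-invariant valuation that is n-homogeneous (φ(tK) = t^n φ(K) for all t ≥ 0) and k-strictly monotone, then k = n. -/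
/-!
The proof rests on one identity. For a convex body `K`, a vector `v` and `a, b ≥ 0`, the bodies
`K + [0, a v]` and `K + [a v, (a + b) v]` have the convex union `K + [0, (a + b) v]`, and convexity
of `K` forces their intersection to be exactly `K + a v`. Hence a translation-invariant valuation
satisfies `φ (K + [0, (a + b) v]) + φ K = φ (K + [0, a v]) + φ (K + [0, b v])`
(`val_add_seg_add`).

(i) Iterating gives `φ (K + [0, m v]) = φ K + m (φ (K + [0, v]) - φ K)`. Dividing by `m`, using
`1`-homogeneity and letting `m → ∞`, one gets `φ (K + [0, v]) = φ K + φ [0, v]`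
(`val_add_seg_of_one_homogeneous`), so `φ` is Minkowski additive when one summand is the unit cube
`C`, the sum of the segments `[0, eᵢ]`. For convex bodies `K ⊊ L` of any dimension, `K + C ⊊ L + C`
by the cancellation law for Minkowski sums, and both sums are `n`-dimensional. Therefore
`φ K + φ C < φ L + φ C`, where `φ C` stands for the sum of the `φ [0, eᵢ]`. The comparison with `∅`
follows since points have value `0`.

(ii) Comparing `∅` with `K + t C` and letting `t → 0` shows `φ ≥ 0` on convex bodies
(`val_nonneg`), so the identity yields `φ (K + [0, 2 v]) ≤ 2 φ (K + [0, v])`. If `k < n`, let `Q` be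
an `(n - 1)`-dimensional unit cube. Doubling its edges one at a time gives
`2 ^ n φ Q = φ (2 Q) ≤ 2 ^ (n - 1) φ Q`, which contradicts `φ Q > φ ∅ = 0`.
-/

open scoped Pointwise
open MeasureTheory

noncomputable section

/-! ### Convex bodies, segments and cubes -/

/-- The segment `[0, t v]` (for `t ≥ 0`), parametrised by the coefficient of `v`. -/
def seg {n : ℕ} (v : Euc n) (t : ℝ) : Set (Euc n) := (fun r : ℝ => r • v) '' Set.Icc 0 t

/-- The `i`-th standard basis vector. -/
def stdVec {n : ℕ} (i : Fin n) : Euc n := EuclideanSpace.single i 1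

/-- The cube of edge length `t` spanned by the coordinate directions in `s`, as a Minkowski sum of
segments. -/
def cube {n : ℕ} (s : Finset (Fin n)) (t : ℝ) : Set (Euc n) := ∑ i ∈ s, seg (stdVec i) t

lemma IsConvexBody.add {n : ℕ} {K L : Set (Euc n)} (hK : IsConvexBody K) (hL : IsConvexBody L) :
    IsConvexBody (K + L) :=
  ⟨hK.1.add hL.1, hK.2.1.add hL.2.1, hK.2.2.add hL.2.2⟩

lemma IsConvexBody.smul {n : ℕ} {K : Set (Euc n)} (hK : IsConvexBody K) (c : ℝ) :
    IsConvexBody (c • K) :=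
  ⟨hK.1.smul_set, hK.2.1.smul c, hK.2.2.smul c⟩

lemma isConvexBody_singleton {n : ℕ} (x : Euc n) : IsConvexBody ({x} : Set (Euc n)) :=
  ⟨Set.singleton_nonempty x, isCompact_singleton, convex_singleton x⟩

lemma isConvexBody_seg {n : ℕ} (v : Euc n) {t : ℝ} (ht : 0 ≤ t) : IsConvexBody (seg v t) := by
  refine ⟨⟨0, 0, ⟨le_rfl, ht⟩, zero_smul ℝ v⟩, isCompact_Icc.image (by fun_prop), ?_⟩
  exact (convex_Icc (0 : ℝ) t).linear_image (LinearMap.toSpanSingleton ℝ (Euc n) v)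

lemma smul_seg {n : ℕ} (v : Euc n) {c t : ℝ} (hc : 0 < c) : c • seg v t = seg v (c * t) := by
  ext x
  simp only [seg, Set.mem_smul_set, Set.mem_image, Set.mem_Icc]
  constructor
  · rintro ⟨_, ⟨r, ⟨h0, h1⟩, rfl⟩, rfl⟩
    exact ⟨c * r, ⟨by positivity, by gcongr⟩, by rw [mul_smul]⟩
  · rintro ⟨r, ⟨h0, h1⟩, rfl⟩
    refine ⟨_, ⟨c⁻¹ * r, ⟨by positivity, ?_⟩, rfl⟩, ?_⟩
    · rw [inv_mul_le_iff₀ hc]; exact h1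
    · rw [smul_smul, mul_inv_cancel_left₀ hc.ne']

lemma cube_insert {n : ℕ} {s : Finset (Fin n)} {i : Fin n} (hi : i ∉ s) (t : ℝ) :
    cube (insert i s) t = seg (stdVec i) t + cube s t := by
  simp only [cube, Finset.sum_insert hi]

lemma isConvexBody_cube {n : ℕ} (s : Finset (Fin n)) {t : ℝ} (ht : 0 ≤ t) :
    IsConvexBody (cube s t) := by
  classical
  induction s using Finset.induction_on with
  | empty =>
    rw [cube, Finset.sum_empty, ← Set.singleton_zero]
    exact isConvexBody_singleton 0
  | insert i s hi ih => rw [cube_insert hi]; exact (isConvexBody_seg _ ht).add ih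

lemma smul_cube {n : ℕ} (s : Finset (Fin n)) {c t : ℝ} (hc : 0 < c) :
    c • cube s t = cube s (c * t) := by
  simp only [cube, Finset.smul_sum, smul_seg _ hc]

lemma zero_mem_cube {n : ℕ} (s : Finset (Fin n)) {t : ℝ} (ht : 0 ≤ t) :
    (0 : Euc n) ∈ cube s t := by
  classical
  induction s using Finset.induction_on with
  | empty => simp [cube]
  | insert i s hi ih =>
    rw [cube_insert hi]
    exact ⟨0, ⟨0, ⟨le_rfl, ht⟩, zero_smul ℝ _⟩, 0, ih, add_zero 0⟩

lemma smul_stdVec_mem_cube {n : ℕ} {s : Finset (Fin n)} {i : Fin n} (hi : i ∈ s) {t : ℝ}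
    (ht : 0 ≤ t) : t • stdVec i ∈ cube s t := by
  classical
  rw [← Finset.insert_erase hi, cube_insert (Finset.notMem_erase i s)]
  exact ⟨_, ⟨t, ⟨ht, le_rfl⟩, rfl⟩, 0, zero_mem_cube _ ht, add_zero _⟩

/-- Adding a nondegenerate cube with directions in `s` to a nonempty set raises its dimension to at
least `#s`, since the direction of the affine span then contains each `stdVec i` with `i ∈ s`. -/
lemma card_le_affDim_add_cube {n : ℕ} {K : Set (Euc n)} (hK : K.Nonempty) (s : Finset (Fin n))
    {t : ℝ} (ht : 0 < t) : s.card ≤ affDim (K + cube s t) := by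
  obtain ⟨x, hx⟩ := hK
  have hmem : ∀ i ∈ s, stdVec i ∈ (affineSpan ℝ (K + cube s t)).direction := by
    intro i hi
    have h0 : x + 0 ∈ affineSpan ℝ (K + cube s t) :=
      subset_affineSpan ℝ _ (Set.add_mem_add hx (zero_mem_cube s ht.le))
    have h1 : x + t • stdVec i ∈ affineSpan ℝ (K + cube s t) :=
      subset_affineSpan ℝ _ (Set.add_mem_add hx (smul_stdVec_mem_cube hi ht.le))
    have h2 := AffineSubspace.vsub_mem_direction h1 h0
    rw [vsub_eq_sub, add_zero, add_sub_cancel_left] at h2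
    simpa [smul_smul, inv_mul_cancel₀ ht.ne'] using Submodule.smul_mem _ t⁻¹ h2
  have hli : LinearIndependent ℝ (fun i : s => (stdVec (i : Fin n) : Euc n)) := by
    have h := (EuclideanSpace.basisFun (Fin n) ℝ).toBasis.linearIndependent.comp
      (fun i : s => (i : Fin n)) Subtype.val_injective
    have e : (fun i : s => (stdVec (i : Fin n) : Euc n)) =
        (EuclideanSpace.basisFun (Fin n) ℝ).toBasis ∘ fun i : s => (i : Fin n) := by
      ext i : 1
      simp [stdVec]
    rw [e]
    exact h
  have hspan := finrank_span_eq_card hli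
  rw [Fintype.card_coe] at hspan
  rw [← hspan]
  refine Submodule.finrank_mono (Submodule.span_le.2 ?_)
  rintro _ ⟨i, rfl⟩
  exact hmem i i.2

/-- Cancellation law for Minkowski sums: a functional separating a point of `L` from `K`, evaluated
where it is maximal on `C`, rules out `L + C ⊆ K + C`. -/
lemma subset_of_add_subset_add {n : ℕ} {K L C : Set (Euc n)} (hK : IsConvexBody K)
    (hC : IsConvexBody C) (h : L + C ⊆ K + C) : L ⊆ K := by
  intro x hx
  by_contra hxK
  obtain ⟨f, u, hf, hu⟩ := geometric_hahn_banach_closed_point hK.2.2 hK.2.1.isClosed hxK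
  obtain ⟨c, hc, hmax⟩ := hC.2.1.exists_isMaxOn hC.1 f.continuous.continuousOn
  obtain ⟨y, hy, d, hd, hyd⟩ := h (Set.add_mem_add hx hc)
  have h1 : f y + f d = f x + f c := by rw [← map_add, ← map_add, ← hyd]
  have h2 := hf y hy
  have h3 : f d ≤ f c := hmax hd
  linarith

/-! ### Continuity along shrinking summands -/

/-- `φ (t K + M)` tends to `φ M` as `t → 0⁺`, in `ε`-`δ` form. -/
lemma val_smul_add_close {n : ℕ} {φ : Set (Euc n) → ℝ} (hcont : ContinuousVal φ)
    {K M : Set (Euc n)} (hK : IsConvexBody K) (hM : IsConvexBody M) {ε : ℝ} (hε : 0 < ε) :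
    ∃ δ : ℝ, 0 < δ ∧ ∀ t : ℝ, 0 ≤ t → t < δ → |φ (t • K + M) - φ M| < ε := by
  obtain ⟨δ, hδ, h⟩ := hcont M hM ε hε
  obtain ⟨R, hR0, hR⟩ := hK.2.1.isBounded.exists_pos_norm_le
  refine ⟨δ / R, by positivity, fun t ht htδ => h _ ((hK.smul t).add hM) ?_⟩
  have htR : t * R < δ := by rwa [lt_div_iff₀ hR0] at htδ
  have hnorm : ∀ z ∈ K, ‖t • z‖ ≤ t * R := fun z hz => by
    rw [norm_smul, Real.norm_of_nonneg ht]
    exact mul_le_mul_of_nonneg_left (hR z hz) ht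
  refine lt_of_le_of_lt (Metric.hausdorffDist_le_of_mem_dist (by positivity) ?_ ?_) htR
  · intro x hx
    obtain ⟨z, hz⟩ := hK.1
    refine ⟨t • z + x, Set.add_mem_add (Set.smul_mem_smul_set hz) hx, ?_⟩
    simpa [dist_eq_norm] using hnorm z hz
  · rintro _ ⟨_, ⟨z, hz, rfl⟩, x, hx, rfl⟩
    refine ⟨x, hx, ?_⟩
    simpa [dist_eq_norm] using hnorm z hz

/-! ### The segment identity -/

lemma mem_add_seg {n : ℕ} {K : Set (Euc n)} {v x : Euc n} {t : ℝ} :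
    x ∈ K + seg v t ↔ ∃ y ∈ K, ∃ r : ℝ, 0 ≤ r ∧ r ≤ t ∧ y + r • v = x := by
  simp [Set.mem_add, seg, and_assoc]

lemma mem_add_singleton {n : ℕ} {K : Set (Euc n)} {w x : Euc n} :
    x ∈ K + {w} ↔ ∃ y ∈ K, y + w = x := by
  rw [Set.add_singleton, Set.mem_image]

lemma add_seg_union {n : ℕ} (K : Set (Euc n)) (v : Euc n) {a b : ℝ} (ha : 0 ≤ a) (hb : 0 ≤ b) :
    (K + seg v a) ∪ (K + seg v b + {a • v}) = K + seg v (a + b) := by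
  ext x
  simp only [Set.mem_union, mem_add_singleton, mem_add_seg]
  constructor
  · rintro (⟨y, hy, r, h0, h1, rfl⟩ | ⟨_, ⟨y, hy, r, h0, h1, rfl⟩, rfl⟩)
    · exact ⟨y, hy, r, h0, by linarith, rfl⟩
    · exact ⟨y, hy, r + a, by linarith, by linarith, by module⟩
  · rintro ⟨y, hy, r, h0, h1, rfl⟩
    rcases le_total r a with h | h
    · exact Or.inl ⟨y, hy, r, h0, h, rfl⟩
    · exact Or.inr ⟨_, ⟨y, hy, r - a, by linarith, by linarith, rfl⟩, by module⟩

/-- On each line parallel to `v`, the two pieces overlap exactly in the translate of `K`; this is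
where convexity of `K` enters. -/
lemma add_seg_inter {n : ℕ} {K : Set (Euc n)} (hK : Convex ℝ K) (v : Euc n) {a b : ℝ}
    (ha : 0 ≤ a) (hb : 0 ≤ b) :
    (K + seg v a) ∩ (K + seg v b + {a • v}) = K + {a • v} := by
  ext x
  simp only [Set.mem_inter_iff, mem_add_singleton, mem_add_seg]
  constructor
  · rintro ⟨⟨y, hy, r, h0, h1, rfl⟩, _, ⟨z, hz, q, g0, g1, rfl⟩, hyz⟩
    rcases eq_or_lt_of_le h1 with rfl | h1
    · exact ⟨y, hy, rfl⟩
    -- The coefficients of `v` relative to `y` and `z` are `r - a < 0` and `q ≥ 0`; the convex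
    -- combination of `y` and `z` with weights proportional to `q` and `a - r` cancels them.
    have hD : 0 < q + (a - r) := by linarith
    refine ⟨(q / (q + (a - r))) • y + ((a - r) / (q + (a - r))) • z,
      hK hy hz (by positivity) (div_nonneg (by linarith) hD.le) (by field_simp), ?_⟩
    have hz' : z = y + (r - a - q) • v := by
      have : z = (z + q • v + a • v) - q • v - a • v := by module
      rw [this, hyz]; module
    rw [hz', smul_add, smul_smul]
    have e1 : q / (q + (a - r)) = 1 - (a - r) / (q + (a - r)) := by field_simp; ring
    have e2 : (a - r) / (q + (a - r)) * (r - a - q) = r - a := by field_simp; ring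
    rw [e2, e1]
    module
  · rintro ⟨y, hy, rfl⟩
    exact ⟨⟨y, hy, a, ha, le_rfl, rfl⟩, y, ⟨y, hy, 0, le_rfl, hb, by simp⟩, rfl⟩

lemma val_add_seg_add {n : ℕ} {φ : Set (Euc n) → ℝ} (hval : IsValuation φ)
    (htrans : TransInvariant φ) {K : Set (Euc n)} (hK : IsConvexBody K) (v : Euc n) {a b : ℝ}
    (ha : 0 ≤ a) (hb : 0 ≤ b) :
    φ (K + seg v (a + b)) + φ K = φ (K + seg v a) + φ (K + seg v b) := by
  have hA := hK.add (isConvexBody_seg v ha)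
  have hB := hK.add (isConvexBody_seg v hb)
  have h := hval.2 _ _ hA (hB.add (isConvexBody_singleton (a • v)))
    (by rw [add_seg_union K v ha hb]; exact (hK.add (isConvexBody_seg v (add_nonneg ha hb))).2.2)
  rwa [add_seg_union K v ha hb, add_seg_inter hK.2.2 v ha hb, htrans _ _ hK, htrans _ _ hB] at h

/-! ### Degree one: additivity -/

lemma val_add_seg_nat {n : ℕ} {φ : Set (Euc n) → ℝ} (hval : IsValuation φ)
    (htrans : TransInvariant φ) {K : Set (Euc n)} (hK : IsConvexBody K) (v : Euc n) (m : ℕ) :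
    φ (K + seg v m) = φ K + m * (φ (K + seg v 1) - φ K) := by
  induction m with
  | zero => simp [seg]
  | succ m ih =>
    have h := val_add_seg_add hval htrans hK v (Nat.cast_nonneg m) zero_le_one
    push_cast
    linarith

lemma val_add_seg_of_one_homogeneous {n : ℕ} {φ : Set (Euc n) → ℝ} (hval : IsValuation φ)
    (hcont : ContinuousVal φ) (htrans : TransInvariant φ)
    (hhom : ∀ K : Set (Euc n), IsConvexBody K → ∀ t : ℝ, 0 ≤ t → φ (t • K) = t * φ K)
    {K : Set (Euc n)} (hK : IsConvexBody K) (v : Euc n) :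
    φ (K + seg v 1) = φ K + φ (seg v 1) := by
  have hS := isConvexBody_seg v (zero_le_one (α := ℝ))
  set g := φ (K + seg v 1) - φ K with hg
  have hscale : ∀ m : ℕ, 0 < m →
      φ (((m : ℝ)⁻¹) • K + seg v 1) = (m : ℝ)⁻¹ * φ K + g := by
    intro m hm
    have hm' : (0 : ℝ) < m := Nat.cast_pos.2 hm
    have e : ((m : ℝ)⁻¹) • (K + seg v m) = ((m : ℝ)⁻¹) • K + seg v 1 := by
      rw [smul_add, smul_seg v (inv_pos.2 hm'), inv_mul_cancel₀ hm'.ne']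
    rw [← e, hhom _ (hK.add (isConvexBody_seg v hm'.le)) _ (inv_pos.2 hm').le,
      val_add_seg_nat hval htrans hK v m, ← hg, mul_add, inv_mul_cancel_left₀ hm'.ne']
  have hinv : Filter.Tendsto (fun m : ℕ => ((m : ℝ)⁻¹)) Filter.atTop (nhds 0) :=
    tendsto_inv_atTop_nhds_zero_nat
  have hlim1 : Filter.Tendsto (fun m : ℕ => φ (((m : ℝ)⁻¹) • K + seg v 1)) Filter.atTop
      (nhds (φ (seg v 1))) := by
    rw [Metric.tendsto_nhds]
    intro ε hε
    obtain ⟨δ, hδ, h⟩ := val_smul_add_close hcont hK hS hε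
    filter_upwards [hinv.eventually_lt_const hδ] with m hm
    exact h _ (by positivity) hm
  have hlim2 : Filter.Tendsto (fun m : ℕ => φ (((m : ℝ)⁻¹) • K + seg v 1)) Filter.atTop
      (nhds g) := by
    have h : Filter.Tendsto (fun m : ℕ => (m : ℝ)⁻¹ * φ K + g) Filter.atTop (nhds g) := by
      simpa using (hinv.mul_const (φ K)).add_const g
    refine h.congr' ?_
    filter_upwards [Filter.eventually_gt_atTop 0] with m hm
    exact (hscale m hm).symm
  have := tendsto_nhds_unique hlim1 hlim2
  linarith

lemma val_add_cube_of_one_homogeneous {n : ℕ} {φ : Set (Euc n) → ℝ} (hval : IsValuation φ)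
    (hcont : ContinuousVal φ) (htrans : TransInvariant φ)
    (hhom : ∀ K : Set (Euc n), IsConvexBody K → ∀ t : ℝ, 0 ≤ t → φ (t • K) = t * φ K)
    (s : Finset (Fin n)) {K : Set (Euc n)} (hK : IsConvexBody K) :
    φ (K + cube s 1) = φ K + ∑ i ∈ s, φ (seg (stdVec i) 1) := by
  classical
  induction s using Finset.induction_on generalizing K with
  | empty => simp [cube]
  | insert i s hi ih =>
    rw [cube_insert hi, ← add_assoc, ih (hK.add (isConvexBody_seg _ zero_le_one)),
      val_add_seg_of_one_homogeneous hval hcont htrans hhom hK, Finset.sum_insert hi, add_assoc]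

/-- Strict monotonicity on convex bodies of arbitrary dimension. -/
lemma val_lt_of_one_homogeneous {n k : ℕ} (hkn : k ≤ n) {φ : Set (Euc n) → ℝ}
    (hval : IsValuation φ) (hcont : ContinuousVal φ) (htrans : TransInvariant φ)
    (hhom : ∀ K : Set (Euc n), IsConvexBody K → ∀ t : ℝ, 0 ≤ t → φ (t • K) = t * φ K)
    (hmono : KStrictMono k φ) {K L : Set (Euc n)} (hK : IsConvexBody K) (hL : IsConvexBody L)
    (hKL : K ⊂ L) : φ K < φ L := by
  have hC : IsConvexBody (cube (Finset.univ : Finset (Fin n)) 1) :=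
    isConvexBody_cube _ zero_le_one
  have hbody : ∀ M : Set (Euc n), IsConvexBody M → IsBody k (M + cube Finset.univ 1) := by
    intro M hM
    refine ⟨hM.add hC, hkn.trans ?_⟩
    simpa using card_le_affDim_add_cube hM.1 Finset.univ (zero_lt_one (α := ℝ))
  have h := hmono _ _ (Or.inl (hbody K hK)) (Or.inl (hbody L hL))
    ⟨Set.add_subset_add_right hKL.1, fun h => hKL.2 (subset_of_add_subset_add hK hC h)⟩
  rw [val_add_cube_of_one_homogeneous hval hcont htrans hhom _ hK,
    val_add_cube_of_one_homogeneous hval hcont htrans hhom _ hL] at h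
  linarith

/-! ### Degree `n`: doubling a cube -/

lemma val_nonneg {n k : ℕ} (hkn : k ≤ n) {φ : Set (Euc n) → ℝ}
    (hval : IsValuation φ) (hcont : ContinuousVal φ) (hmono : KStrictMono k φ)
    {K : Set (Euc n)} (hK : IsConvexBody K) : 0 ≤ φ K := by
  by_contra! hneg
  have hC : IsConvexBody (cube (Finset.univ : Finset (Fin n)) 1) :=
    isConvexBody_cube _ zero_le_one
  obtain ⟨δ, hδ, h⟩ := val_smul_add_close hcont hC hK (neg_pos.2 hneg)
  have h1 := h (δ / 2) (by positivity) (by linarith)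
  rw [smul_cube _ (half_pos hδ), mul_one, add_comm] at h1
  have hb : IsConvexBody (K + cube Finset.univ (δ / 2)) :=
    hK.add (isConvexBody_cube _ (half_pos hδ).le)
  have hdim := card_le_affDim_add_cube hK.1 Finset.univ (half_pos hδ)
  rw [Finset.card_univ, Fintype.card_fin] at hdim
  have h2 := hmono ∅ _ (Or.inr rfl) (Or.inl ⟨hb, hkn.trans hdim⟩)
    (Set.empty_ssubset.2 hb.1)
  rw [hval.1] at h2
  linarith [(abs_lt.1 h1).2]

/-- Doubling the edges of a cube summand one at a time at most doubles the value each time. -/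
lemma val_add_cube_two_le {n k : ℕ} (hkn : k ≤ n) {φ : Set (Euc n) → ℝ}
    (hval : IsValuation φ) (hcont : ContinuousVal φ) (htrans : TransInvariant φ)
    (hmono : KStrictMono k φ) (s : Finset (Fin n)) {K : Set (Euc n)} (hK : IsConvexBody K) :
    φ (K + cube s 2) ≤ 2 ^ s.card * φ (K + cube s 1) := by
  classical
  induction s using Finset.induction_on generalizing K with
  | empty => simp [cube]
  | insert i s hi ih =>
    have hKs := hK.add (isConvexBody_cube s (zero_le_one (α := ℝ)))
    have h1 := ih (hK.add (isConvexBody_seg (stdVec i) (zero_le_two (α := ℝ))))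
    have h2 := val_add_seg_add hval htrans hKs (stdVec i) (zero_le_one (α := ℝ)) zero_le_one
    have h3 := val_nonneg hkn hval hcont hmono hKs
    rw [one_add_one_eq_two] at h2
    rw [add_right_comm K (cube s 1), add_right_comm K (cube s 1)] at h2
    rw [cube_insert hi, cube_insert hi, ← add_assoc, ← add_assoc, Finset.card_insert_of_notMem hi,
      pow_succ, mul_assoc]
    refine h1.trans (mul_le_mul_of_nonneg_left ?_ (by positivity))
    linarith

/-! ### The theorem -/

/-- (i) A continuous, translation-invariant, `1`-homogeneous,
`k`-strictly monotone valuation is `1`-strictly monotone. (ii) For `n ≥ 2`, a continuous,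
translation-invariant, `n`-homogeneous, `k`-strictly monotone valuation forces `k = n`. -/
theorem homogeneous_strict_monotonicity (n k : ℕ) (hn : 1 ≤ n) (hk1 : 1 ≤ k) (hkn : k ≤ n)
    (φ : Set (Euc n) → ℝ) (hval : IsValuation φ) (hcont : ContinuousVal φ)
    (htrans : TransInvariant φ) :
    ((∀ K : Set (Euc n), IsConvexBody K → ∀ t : ℝ, 0 ≤ t → φ (t • K) = t * φ K) →
      KStrictMono k φ → KStrictMono 1 φ) ∧
    (2 ≤ n →
      (∀ K : Set (Euc n), IsConvexBody K → ∀ t : ℝ, 0 ≤ t → φ (t • K) = t ^ n * φ K) →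
      KStrictMono k φ → k = n) := by
  refine ⟨fun hhom hmono K L hK hL hKL => ?_, fun _ hhom hmono => ?_⟩
  · rcases hL with hL | rfl
    swap
    · exact absurd (Set.empty_subset K) hKL.2
    rcases hK with hK | rfl
    · exact val_lt_of_one_homogeneous hkn hval hcont htrans hhom hmono hK.1 hL.1 hKL
    · obtain ⟨p, hp⟩ := hL.1.1
      have hpt : φ {p} = 0 := by
        have h0 := hhom {0} (isConvexBody_singleton 0) 0 le_rfl
        have h1 := htrans {0} p (isConvexBody_singleton 0)
        simp only [Set.smul_set_singleton, smul_zero, zero_mul] at h0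
        simpa [h0] using h1
      rw [hval.1, ← hpt]
      refine val_lt_of_one_homogeneous hkn hval hcont htrans hhom hmono
        (isConvexBody_singleton p) hL.1 (LE.le.ssubset_of_ne (by simpa using hp) ?_)
      rintro rfl
      have := hL.2
      simp [affDim, direction_affineSpan] at this
  · by_contra hne
    have hcard : (Finset.univ.erase (⟨0, hn⟩ : Fin n)).card = n - 1 := by simp
    set s := Finset.univ.erase (⟨0, hn⟩ : Fin n)
    have h0 := isConvexBody_singleton (0 : Euc n)
    have hQ := isConvexBody_cube s (zero_le_one (α := ℝ))
    have hdim := card_le_affDim_add_cube h0.1 s (zero_lt_one (α := ℝ))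
    have hle := val_add_cube_two_le hkn hval hcont htrans hmono s h0
    have hdbl := hhom _ hQ 2 zero_le_two
    rw [smul_cube s two_pos, mul_one] at hdbl
    rw [Set.singleton_zero, zero_add] at hdim
    rw [Set.singleton_zero, zero_add, zero_add, hdbl, hcard] at hle
    have hpos := hmono ∅ _ (Or.inr rfl) (Or.inl ⟨hQ, by omega⟩) (Set.empty_ssubset.2 hQ.1)
    rw [hval.1] at hpos
    have hpow : (2 : ℝ) ^ (n - 1) < 2 ^ n := pow_lt_pow_right₀ one_lt_two (by omega)
    exact absurd hle (not_le.2 (mul_lt_mul_of_pos_right hpow hpos))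
end
end

section
/- Let φ : K^n → ℝ be a continuous, translation-invariant, monotone valuation that is 1-homogeneous (φ(tK) = tφ(K) for all t ≥ 0). Then the join-deviation ρ_φ is symmetric, nonnegative, and satisfies the triangle inequality on K^n. If φ is moreover 1-strictly monotone, then ρ_φ is a metric on K^n: additionally ρ_φ(K,L) = 0 implies K = L for all K, L ∈ K^n. -/
/-!
The heart of the matter is that `φ` is Minkowski additive, `φ (K + L) = φ K + φ L`. Granting this,
the inclusion `(K ∨ L) + M ⊆ (K ∨ M) + (M ∨ L)` (with `∨` the convex hull of the union) and
monotonicity give `φ (K ∨ L) + φ M ≤ φ (K ∨ M) + φ (M ∨ L)`, which is the triangle inequality.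
Nonnegativity is monotonicity, and if `ρ_φ(K, L) = 0`, then `K`, `L` and `K ∨ L` have the same value
under `φ`, so that strict monotonicity forces them to coincide.

For Minkowski additivity, fix `L` and consider the defect `ψ P = φ (L + P) - φ L - φ P`. Every
polytope is, up to translation, a linear image `P` of an orthoscheme
`T = {1 ≥ x₀ ≥ ⋯ ≥ x_{m-1} ≥ 0}`. Hyperplanes `x_i = t` may be used for cutting upstairs: for a
convex set cut by a hyperplane, the image of the intersection of the two parts is the intersection
of the images (`image_cut`). Cutting `(s + t) T` successively by `x_0 = t, x_1 = t, …` produces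
translates of `t T` and `s T`, together with pieces and walls that are sums of lower-dimensional
orthoschemes (`image_cell`); by induction on `m` the latter have defect zero. Hence
`ψ ((s + t) P) = ψ (s P) + ψ (t P)` (`defect_poly_add`), so `ψ (k P) = k ψ P` for positive integers
`k`. By homogeneity and continuity `ψ (k P) = o(k)`, so `ψ P = 0` (`isAdditiveAt_poly`). General
bodies follow by approximation with inscribed polytopes (`map_add`).
-/

open scoped Pointwise
open MeasureTheory

noncomputable section

/-- The `φ` join-deviation `ρ_φ(K,L) = 2 φ(conv(K ∪ L)) - φ K - φ L`. -/
def JoinDev {n : ℕ} (φ : Set (Euc n) → ℝ) (K L : Set (Euc n)) : ℝ :=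
  2 * φ (convexHull ℝ (K ∪ L)) - φ K - φ L

namespace JoinDeviation

/-! ### Convex bodies -/

section Bodies

variable {n : ℕ}

theorem isConvexBody_add {K L : Set (Euc n)} (hK : IsConvexBody K) (hL : IsConvexBody L) :
    IsConvexBody (K + L) :=
  ⟨hK.1.add hL.1, hK.2.1.add hL.2.1, hK.2.2.add hL.2.2⟩

theorem isConvexBody_smul {K : Set (Euc n)} (hK : IsConvexBody K) (t : ℝ) :
    IsConvexBody (t • K) :=
  ⟨hK.1.smul_set, hK.2.1.smul t, hK.2.2.smul t⟩

theorem isConvexBody_singleton (v : Euc n) : IsConvexBody ({v} : Set (Euc n)) :=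
  ⟨Set.singleton_nonempty v, isCompact_singleton, convex_singleton v⟩

theorem isConvexBody_unitBall : IsConvexBody (Metric.closedBall (0 : Euc n) 1) :=
  ⟨⟨0, by simp⟩, isCompact_closedBall 0 1, convex_closedBall 0 1⟩

theorem isConvexBody_join {K L : Set (Euc n)} (hK : IsConvexBody K) (hL : IsConvexBody L) :
    IsConvexBody (convexHull ℝ (K ∪ L)) := by
  refine ⟨(hK.1.mono Set.subset_union_left).convexHull, ?_, convex_convexHull ℝ _⟩
  rw [hK.2.2.convexHull_union hL.2.2 hK.1 hL.1]
  have himg : convexJoin ℝ K L =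
      (fun q : ℝ × Euc n × Euc n => (1 - q.1) • q.2.1 + q.1 • q.2.2) ''
        (Set.Icc (0 : ℝ) 1 ×ˢ K ×ˢ L) := by
    ext x
    simp only [mem_convexJoin, segment_eq_image, Set.mem_image, Set.mem_prod, Prod.exists]
    constructor
    · rintro ⟨a, ha, b, hb, t, ht, rfl⟩
      exact ⟨t, a, b, ⟨ht, ha, hb⟩, rfl⟩
    · rintro ⟨t, a, b, ⟨ht, ha, hb⟩, rfl⟩
      exact ⟨a, ha, b, hb, t, ht, rfl⟩
  rw [himg]
  exact (isCompact_Icc.prod (hK.2.1.prod hL.2.1)).image (by fun_prop)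

end Bodies

/-! ### The defect of additivity -/

/-- `P` is a direction of Minkowski additivity of `φ`. -/
def IsAdditiveAt {n : ℕ} (φ : Set (Euc n) → ℝ) (P : Set (Euc n)) : Prop :=
  ∀ L : Set (Euc n), IsConvexBody L → φ (L + P) = φ L + φ P

/-- The defect of additivity of `φ` on the pair `L`, `P`. -/
def defect {n : ℕ} (φ : Set (Euc n) → ℝ) (L P : Set (Euc n)) : ℝ :=
  φ (L + P) - φ L - φ P

theorem defect_eq_zero {n : ℕ} {φ : Set (Euc n) → ℝ} {L P : Set (Euc n)}
    (hP : IsAdditiveAt φ P) (hL : IsConvexBody L) : defect φ L P = 0 := by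
  unfold defect
  rw [hP L hL]; ring

theorem IsAdditiveAt.add {n : ℕ} {φ : Set (Euc n) → ℝ} {P Q : Set (Euc n)}
    (hPb : IsConvexBody P) (hP : IsAdditiveAt φ P) (hQ : IsAdditiveAt φ Q) :
    IsAdditiveAt φ (P + Q) := by
  intro L hL
  rw [← add_assoc, hQ _ (isConvexBody_add hL hPb), hP _ hL, hQ _ hPb]; ring

theorem defect_add_left {n : ℕ} {φ : Set (Euc n) → ℝ} {L P Q : Set (Euc n)}
    (hQ : IsAdditiveAt φ Q) (hL : IsConvexBody L) (hP : IsConvexBody P) :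
    defect φ L (Q + P) = defect φ L P := by
  unfold defect
  rw [add_comm Q P, ← add_assoc, hQ _ (isConvexBody_add hL hP), hQ _ hP]; ring

/-! ### Orthoschemes and their linear images -/

section Chains

variable {n : ℕ}

/-- The dilated orthoscheme `{u ≥ x₀ ≥ x₁ ≥ … ≥ x_{m-1} ≥ 0}`, as a set of sequences that vanish
from the index `m` on. -/
def chain (m : ℕ) (u : ℝ) : Set (ℕ → ℝ) :=
  {x | (∀ j, x (j + 1) ≤ x j) ∧ (∀ j, 0 ≤ x j) ∧ (∀ j, x j ≤ u) ∧ ∀ j, m ≤ j → x j = 0}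

/-- The linear map sending the first `m` basis sequences to the vectors `w₀, …, w_{m-1}`. -/
def combo (m : ℕ) (w : ℕ → Euc n) : (ℕ → ℝ) →ₗ[ℝ] Euc n :=
  ∑ i ∈ Finset.range m, (LinearMap.proj i : (ℕ → ℝ) →ₗ[ℝ] ℝ).smulRight (w i)

theorem combo_apply (m : ℕ) (w : ℕ → Euc n) (x : ℕ → ℝ) :
    combo m w x = ∑ i ∈ Finset.range m, x i • w i := by
  simp [combo, LinearMap.sum_apply]

theorem continuous_combo (m : ℕ) (w : ℕ → Euc n) : Continuous (combo m w) := by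
  have : (combo m w : (ℕ → ℝ) → Euc n) = fun x => ∑ i ∈ Finset.range m, x i • w i :=
    funext (combo_apply m w)
  rw [this]
  fun_prop

theorem isCompact_chain (m : ℕ) (u : ℝ) : IsCompact (chain m u) := by
  refine (isCompact_univ_pi (fun _ : ℕ => isCompact_Icc (a := (0 : ℝ)) (b := u))).of_isClosed_subset
    ?_ (fun x hx j _ => ⟨hx.2.1 j, hx.2.2.1 j⟩)
  simp only [chain, Set.ofPred_and, Set.ofPred_forall]
  refine IsClosed.inter ?_ (IsClosed.inter ?_ (IsClosed.inter ?_ ?_))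
  · exact isClosed_iInter fun j => isClosed_le (by fun_prop) (by fun_prop)
  · exact isClosed_iInter fun j => isClosed_le (by fun_prop) (by fun_prop)
  · exact isClosed_iInter fun j => isClosed_le (by fun_prop) (by fun_prop)
  · exact isClosed_iInter fun j => isClosed_iInter fun _ =>
      isClosed_eq (by fun_prop) (by fun_prop)

theorem convex_chain (m : ℕ) (u : ℝ) : Convex ℝ (chain m u) := by
  intro x hx y hy a b ha hb hab
  refine ⟨fun j => ?_, fun j => ?_, fun j => ?_, fun j hj => ?_⟩ <;>
    simp only [Pi.add_apply, Pi.smul_apply, smul_eq_mul]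
  · exact add_le_add (mul_le_mul_of_nonneg_left (hx.1 j) ha)
      (mul_le_mul_of_nonneg_left (hy.1 j) hb)
  · exact add_nonneg (mul_nonneg ha (hx.2.1 j)) (mul_nonneg hb (hy.2.1 j))
  · calc a * x j + b * y j ≤ a * u + b * u := add_le_add
          (mul_le_mul_of_nonneg_left (hx.2.2.1 j) ha) (mul_le_mul_of_nonneg_left (hy.2.2.1 j) hb)
      _ = u := by rw [← add_mul, hab, one_mul]
  · rw [hx.2.2.2 j hj, hy.2.2.2 j hj]; ring

/-- The polytope `u • conv {0, w₀, w₀ + w₁, …, w₀ + ⋯ + w_{m-1}}`, as a linear image of an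
orthoscheme. -/
def poly (m : ℕ) (w : ℕ → Euc n) (u : ℝ) : Set (Euc n) := combo m w '' chain m u

theorem isConvexBody_image {X : Set (ℕ → ℝ)} (hX : X.Nonempty) (hc : IsCompact X)
    (hv : Convex ℝ X) (m : ℕ) (w : ℕ → Euc n) : IsConvexBody (combo m w '' X) :=
  ⟨hX.image _, hc.image (continuous_combo m w), hv.linear_image _⟩

theorem isConvexBody_poly (m : ℕ) (w : ℕ → Euc n) {u : ℝ} (hu : 0 ≤ u) :
    IsConvexBody (poly m w u) :=
  isConvexBody_image ⟨0, by simp [chain, hu]⟩ (isCompact_chain m u) (convex_chain m u) m w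

theorem poly_zero (w : ℕ → Euc n) {u : ℝ} (hu : 0 ≤ u) : poly 0 w u = {0} := by
  have h : (combo 0 w : (ℕ → ℝ) → Euc n) = fun _ => 0 := by
    funext x; simp [combo_apply]
  unfold poly
  rw [h]
  exact Set.Nonempty.image_const ⟨0, by simp [chain, hu]⟩ _

theorem poly_mul (m : ℕ) (w : ℕ → Euc n) {c : ℝ} (hc : 0 < c) (u : ℝ) :
    poly m w (c * u) = c • poly m w u := by
  have hch : chain m (c * u) = c • chain m u := by
    ext x
    rw [Set.mem_smul_set_iff_inv_smul_mem₀ hc.ne']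
    have hci : 0 < c⁻¹ := inv_pos.2 hc
    simp only [chain, Set.mem_ofPred_eq, Pi.smul_apply, smul_eq_mul, mul_le_mul_iff_right₀ hci,
      mul_nonneg_iff_of_pos_left hci, inv_mul_le_iff₀ hc, mul_eq_zero, hci.ne', false_or]
  unfold poly
  rw [hch]
  exact Set.image_smul_comm _ _ _ fun x => map_smul _ c x

/-- The cells of the subdivision of `chain m (s + t)` by the hyperplanes `x j = t`: the coordinates
are `≥ t` below `i`, equal to `t` between `i` and `k`, and `≤ t` from `k` on. -/
def cell (m i k : ℕ) (s t : ℝ) : Set (ℕ → ℝ) :=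
  {x | x ∈ chain m (s + t) ∧ (∀ j, j < i → t ≤ x j) ∧ (∀ j, i ≤ j → j < k → x j = t) ∧
    ∀ j, k ≤ j → x j ≤ t}

/-- A cell of the subdivision projects to a translate of a sum of two smaller polytopes. -/
theorem image_cell {m i k : ℕ} (hik : i ≤ k) (hkm : k ≤ m) (w : ℕ → Euc n) {s t : ℝ}
    (hs : 0 ≤ s) (ht : 0 ≤ t) :
    combo m w '' cell m i k s t =
      {t • ∑ j ∈ Finset.range k, w j} + (poly i w s + poly (m - k) (fun j => w (k + j)) t) := by
  -- the sum defining `combo m w` splits at the indices `i` and `k`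
  have key : ∀ x y z : ℕ → ℝ, (∀ j, j < i → x j = t + y j) → (∀ j, i ≤ j → j < k → x j = t) →
      (∀ j, x (k + j) = z j) → combo m w x =
        t • ∑ j ∈ Finset.range k, w j + (combo i w y + combo (m - k) (fun j => w (k + j)) z) := by
    intro x y z h1 h2 h3
    obtain ⟨d, rfl⟩ := Nat.exists_eq_add_of_le hkm
    obtain ⟨e, rfl⟩ := Nat.exists_eq_add_of_le hik
    simp only [combo_apply, Nat.add_sub_cancel_left]
    rw [Finset.sum_range_add _ (i + e) d, Finset.sum_range_add _ i e, Finset.smul_sum,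
      Finset.sum_range_add _ i e]
    have e1 : ∑ j ∈ Finset.range i, x j • w j =
        ∑ j ∈ Finset.range i, t • w j + ∑ j ∈ Finset.range i, y j • w j := by
      rw [← Finset.sum_add_distrib]
      refine Finset.sum_congr rfl fun j hj => ?_
      rw [h1 j (Finset.mem_range.1 hj), add_smul]
    have e2 : ∑ j ∈ Finset.range e, x (i + j) • w (i + j) =
        ∑ j ∈ Finset.range e, t • w (i + j) := by
      refine Finset.sum_congr rfl fun j hj => ?_
      rw [h2 (i + j) (by omega) (by have := Finset.mem_range.1 hj; omega)]
    rw [e1, e2]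
    simp only [h3]
    abel
  apply Set.Subset.antisymm
  · rintro _ ⟨x, ⟨⟨hx1, hx2, hx3, hx4⟩, hx5, hx6, hx7⟩, rfl⟩
    rw [key x (fun j => if j < i then x j - t else 0) (fun j => x (k + j))
      (fun j hj => by simp [hj]) hx6 (fun j => rfl)]
    refine Set.add_mem_add rfl (Set.add_mem_add ⟨_, ⟨?_, ?_, ?_, ?_⟩, rfl⟩
      ⟨_, ⟨fun j => hx1 (k + j), fun j => hx2 _, fun j => hx7 _ (by omega),
        fun j hj => hx4 _ (by omega)⟩, rfl⟩)
    · intro j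
      have := hx1 j
      have h5 := hx5 j
      split_ifs with h h' h'
      · linarith
      · omega
      · linarith [h5 h']
      · exact le_rfl
    · intro j
      split_ifs with h
      · linarith [hx5 j h]
      · exact le_rfl
    · intro j
      split_ifs with h
      · linarith [hx3 j]
      · exact hs
    · intro j hj
      simp [Nat.not_lt.2 hj]
  · rintro _ ⟨_, rfl, _, ⟨_, ⟨y, ⟨hy1, hy2, hy3, hy4⟩, rfl⟩, _, ⟨z, ⟨hz1, hz2, hz3, hz4⟩, rfl⟩,
      rfl⟩, rfl⟩
    refine ⟨fun j => if j < k then t + y j else z (j - k), ⟨⟨?_, ?_, ?_, ?_⟩, ?_, ?_, ?_⟩, ?_⟩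
    · intro j
      dsimp only
      split_ifs with h h' h'
      · linarith [hy1 j]
      · omega
      · linarith [hy2 j, hz3 (j + 1 - k)]
      · have : j + 1 - k = (j - k) + 1 := by omega
        rw [this]; exact hz1 _
    · intro j
      dsimp only
      split_ifs with h
      · linarith [hy2 j]
      · exact hz2 _
    · intro j
      dsimp only
      split_ifs with h
      · linarith [hy3 j]
      · linarith [hz3 (j - k)]
    · intro j hj
      have : ¬ j < k := by omega
      simp only [this, if_false]
      exact hz4 _ (by omega)
    · intro j hj
      have : j < k := by omega
      simp only [this, if_true]
      linarith [hy2 j]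
    · intro j hj hj'
      simp [hj', hy4 j hj]
    · intro j hj
      have : ¬ j < k := by omega
      simp only [this, if_false]
      exact hz3 _
    · refine key _ y z (fun j hj => ?_) (fun j hj hj' => ?_) (fun j => ?_)
      · simp [lt_of_lt_of_le hj hik]
      · simp [hj', hy4 j hj]
      · simp

end Chains

/-! ### Minkowski additivity -/

section Additivity

variable {n : ℕ} {φ : Set (Euc n) → ℝ}

/-- `X ↦ φ (L + combo m w '' X)` is additive when a compact convex `X` is cut by a coordinate
hyperplane: a linear image commutes with the intersection of the two parts because every segment
joining them crosses the hyperplane. -/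
theorem image_cut (hval : IsValuation φ) {L : Set (Euc n)} (hL : IsConvexBody L)
    {X : Set (ℕ → ℝ)} (hXc : IsCompact X) (hXv : Convex ℝ X) (m : ℕ) (w : ℕ → Euc n) (i : ℕ)
    (t : ℝ) (hne : (X ∩ {x | x i = t}).Nonempty) :
    φ (L + combo m w '' X) + φ (L + combo m w '' (X ∩ {x | x i = t})) =
      φ (L + combo m w '' (X ∩ {x | x i ≤ t})) + φ (L + combo m w '' (X ∩ {x | t ≤ x i})) := by
  obtain ⟨x₀, hx₀, hx₀t⟩ := hne
  set π := combo m w with hπ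
  have hlin : IsLinearMap ℝ (fun x : ℕ → ℝ => x i) := ⟨fun _ _ => rfl, fun _ _ => rfl⟩
  have hb1 : IsConvexBody (L + π '' (X ∩ {x | x i ≤ t})) :=
    isConvexBody_add hL (isConvexBody_image (X := X ∩ {x | x i ≤ t}) ⟨x₀, hx₀, le_of_eq hx₀t⟩
      (hXc.inter_right (isClosed_le (by fun_prop) (by fun_prop)))
      (hXv.inter (convex_halfSpace_le hlin t)) m w)
  have hb2 : IsConvexBody (L + π '' (X ∩ {x | t ≤ x i})) :=
    isConvexBody_add hL (isConvexBody_image (X := X ∩ {x | t ≤ x i}) ⟨x₀, hx₀, ge_of_eq hx₀t⟩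
      (hXc.inter_right (isClosed_le (by fun_prop) (by fun_prop)))
      (hXv.inter (convex_halfSpace_ge hlin t)) m w)
  have hU : (L + π '' (X ∩ {x | x i ≤ t})) ∪ (L + π '' (X ∩ {x | t ≤ x i})) = L + π '' X := by
    rw [← Set.add_union, ← Set.image_union, ← Set.inter_union_distrib_left]
    congr 2
    exact Set.inter_eq_left.2 fun x _ => le_total (x i) t
  have hI : (L + π '' (X ∩ {x | x i ≤ t})) ∩ (L + π '' (X ∩ {x | t ≤ x i})) =
      L + π '' (X ∩ {x | x i = t}) := by
    apply Set.Subset.antisymm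
    · rintro y ⟨⟨l₁, hl₁, _, ⟨x₁, ⟨hx₁, hx₁t⟩, rfl⟩, h₁⟩, ⟨l₂, hl₂, _, ⟨x₂, ⟨hx₂, hx₂t⟩, rfl⟩, h₂⟩⟩
      simp only [Set.mem_ofPred_eq] at hx₁t hx₂t h₁ h₂
      obtain ⟨a, b, ha, hb, hab, hcomb⟩ : ∃ a b : ℝ, 0 ≤ a ∧ 0 ≤ b ∧ a + b = 1 ∧
          a * x₁ i + b * x₂ i = t := by
        have : t ∈ segment ℝ (x₁ i) (x₂ i) := by
          rw [segment_eq_Icc (hx₁t.trans hx₂t)]; exact ⟨hx₁t, hx₂t⟩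
        simpa [segment] using this
      refine ⟨a • l₁ + b • l₂, hL.2.2 hl₁ hl₂ ha hb hab, _,
        ⟨a • x₁ + b • x₂, ⟨hXv hx₁ hx₂ ha hb hab, by simpa using hcomb⟩, rfl⟩, ?_⟩
      calc a • l₁ + b • l₂ + π (a • x₁ + b • x₂)
          = a • (l₁ + π x₁) + b • (l₂ + π x₂) := by
            rw [map_add, map_smul, map_smul, smul_add, smul_add]; abel
        _ = y := by rw [h₁, h₂, ← add_smul, hab, one_smul]
    · refine Set.subset_inter ?_ ?_ <;>
        refine Set.add_subset_add_left (Set.image_mono (Set.inter_subset_inter_right X ?_))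
      · exact fun x hx => le_of_eq hx
      · exact fun x hx => ge_of_eq hx
  have hconv : Convex ℝ ((L + π '' (X ∩ {x | x i ≤ t})) ∪ (L + π '' (X ∩ {x | t ≤ x i}))) := by
    rw [hU]
    exact hL.2.2.add (hXv.linear_image π)
  have := hval.2 _ _ hb1 hb2 hconv
  rwa [hU, hI] at this

theorem defect_cut (hval : IsValuation φ) {L : Set (Euc n)} (hL : IsConvexBody L)
    {X : Set (ℕ → ℝ)} (hXc : IsCompact X) (hXv : Convex ℝ X) (m : ℕ) (w : ℕ → Euc n) (i : ℕ)
    (t : ℝ) (hne : (X ∩ {x | x i = t}).Nonempty) :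
    defect φ L (combo m w '' X) + defect φ L (combo m w '' (X ∩ {x | x i = t})) =
      defect φ L (combo m w '' (X ∩ {x | x i ≤ t})) +
        defect φ L (combo m w '' (X ∩ {x | t ≤ x i})) := by
  have h1 := image_cut hval hL hXc hXv m w i t hne
  have h2 := image_cut hval (isConvexBody_singleton 0) hXc hXv m w i t hne
  simp only [Set.singleton_zero, zero_add] at h2
  unfold defect
  linarith

theorem map_zero_singleton
    (hhomog : ∀ K : Set (Euc n), IsConvexBody K → ∀ t : ℝ, 0 ≤ t → φ (t • K) = t * φ K) :
    φ {0} = 0 := by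
  have := hhomog {0} (isConvexBody_singleton 0) 0 le_rfl
  simpa using this

theorem map_singleton (htrans : TransInvariant φ)
    (hhomog : ∀ K : Set (Euc n), IsConvexBody K → ∀ t : ℝ, 0 ≤ t → φ (t • K) = t * φ K)
    (v : Euc n) : φ {v} = 0 := by
  have := htrans {0} v (isConvexBody_singleton 0)
  rw [map_zero_singleton hhomog] at this
  simpa using this

theorem isAdditiveAt_singleton (htrans : TransInvariant φ)
    (hhomog : ∀ K : Set (Euc n), IsConvexBody K → ∀ t : ℝ, 0 ≤ t → φ (t • K) = t * φ K)
    (v : Euc n) : IsAdditiveAt φ {v} := by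
  intro L hL
  rw [htrans L v hL, map_singleton htrans hhomog v, add_zero]

theorem continuous_dilate (hcont : ContinuousVal φ) {K L : Set (Euc n)} (hK : IsConvexBody K)
    (hL : IsConvexBody L) {ε : ℝ} (hε : 0 < ε) :
    ∃ δ : ℝ, 0 < δ ∧ ∀ t : ℝ, 0 ≤ t → t < δ → |φ (K + t • L) - φ K| < ε := by
  obtain ⟨δ, hδ, h⟩ := hcont K hK ε hε
  obtain ⟨R, hR, hLR⟩ := hL.2.1.isBounded.exists_pos_norm_le
  refine ⟨δ / R, div_pos hδ hR, fun t ht htδ => ?_⟩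
  refine h _ (isConvexBody_add hK (isConvexBody_smul hL t)) ?_
  refine lt_of_le_of_lt (Metric.hausdorffDist_le_of_mem_dist (mul_nonneg ht hR.le) ?_ ?_)
    ((lt_div_iff₀ hR).1 htδ)
  · intro x hx
    obtain ⟨l, hl⟩ := hL.1
    refine ⟨x + t • l, Set.add_mem_add hx (Set.smul_mem_smul_set hl), ?_⟩
    rw [dist_self_add_right, norm_smul, Real.norm_of_nonneg ht]
    exact mul_le_mul_of_nonneg_left (hLR l hl) ht
  · rintro _ ⟨x, hx, _, ⟨l, hl, rfl⟩, rfl⟩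
    refine ⟨x, hx, ?_⟩
    simp only [dist_self_add_left, norm_smul, Real.norm_of_nonneg ht]
    exact mul_le_mul_of_nonneg_left (hLR l hl) ht

/-- The defect of additivity of `L` on the dilates `u • P` of `P = poly m w 1` is additive in `u`,
once polytopes with fewer vertices are known to be directions of additivity. -/
theorem defect_poly_add (hval : IsValuation φ) (htrans : TransInvariant φ)
    (hhomog : ∀ K : Set (Euc n), IsConvexBody K → ∀ t : ℝ, 0 ≤ t → φ (t • K) = t * φ K)
    {m : ℕ} (hm : 0 < m)
    (ih : ∀ k, k < m → ∀ (w : ℕ → Euc n) (u : ℝ), 0 ≤ u → IsAdditiveAt φ (poly k w u))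
    (w : ℕ → Euc n) {L : Set (Euc n)} (hL : IsConvexBody L) {s t : ℝ} (hs : 0 ≤ s) (ht : 0 ≤ t) :
    defect φ L (poly m w (s + t)) = defect φ L (poly m w s) + defect φ L (poly m w t) := by
  -- the part of the orthoscheme whose first `i` coordinates are `≥ t`
  let B : ℕ → Set (ℕ → ℝ) := fun i => {x | x ∈ chain m (s + t) ∧ ∀ j, j < i → t ≤ x j}
  have hBeq : ∀ i, B i = chain m (s + t) ∩ ⋂ j, ⋂ (_ : j < i), {x | t ≤ x j} := by
    intro i; ext x; simp [B]
  have hBc : ∀ i, IsCompact (B i) := by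
    intro i
    rw [hBeq]
    exact (isCompact_chain m _).inter_right (isClosed_iInter fun j => isClosed_iInter fun _ =>
      isClosed_le (by fun_prop) (by fun_prop))
  have hBv : ∀ i, Convex ℝ (B i) := by
    intro i
    rw [hBeq]
    exact (convex_chain m _).inter (convex_iInter fun j => convex_iInter fun _ =>
      convex_halfSpace_ge (f := fun x : ℕ → ℝ => x j) ⟨fun _ _ => rfl, fun _ _ => rfl⟩ t)
  have hanti : ∀ {x}, x ∈ chain m (s + t) → Antitone x := fun hx => antitone_nat_of_succ_le hx.1
  have hC : ∀ i, B i ∩ {x | x i = t} = cell m i (i + 1) s t := by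
    intro i; ext x
    constructor
    · rintro ⟨⟨hx, h1⟩, h2⟩
      refine ⟨hx, h1, fun j hj hj' => ?_, fun j hj => ?_⟩
      · obtain rfl : j = i := by omega
        exact h2
      · exact (hanti hx (by omega : i ≤ j)).trans (le_of_eq h2)
    · rintro ⟨hx, h1, h2, -⟩
      exact ⟨⟨hx, h1⟩, h2 i le_rfl (by omega)⟩
  have hA : ∀ i, B i ∩ {x | x i ≤ t} = cell m i i s t := by
    intro i; ext x
    constructor
    · rintro ⟨⟨hx, h1⟩, h2⟩
      exact ⟨hx, h1, fun j hj hj' => by omega, fun j hj => (hanti hx hj).trans h2⟩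
    · rintro ⟨hx, h1, -, h2⟩
      exact ⟨⟨hx, h1⟩, h2 i le_rfl⟩
  have hBs : ∀ i, B i ∩ {x | t ≤ x i} = B (i + 1) := by
    intro i; ext x
    constructor
    · rintro ⟨⟨hx, h1⟩, h2⟩
      refine ⟨hx, fun j hj => ?_⟩
      rcases Nat.lt_succ_iff_lt_or_eq.1 hj with h | rfl
      · exact h1 j h
      · exact h2
    · rintro ⟨hx, h1⟩
      exact ⟨⟨hx, fun j hj => h1 j (by omega)⟩, h1 i (by omega)⟩
  have hsing := isAdditiveAt_singleton htrans hhomog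
  -- the walls between consecutive pieces are sums of lower polytopes
  have hdC : ∀ i, i < m → defect φ L (combo m w '' cell m i (i + 1) s t) = 0 := by
    intro i hi
    rw [image_cell (by omega) (by omega) w hs ht]
    exact defect_eq_zero ((hsing _).add (isConvexBody_singleton _)
      ((ih i hi w s hs).add (isConvexBody_poly i w hs) (ih _ (by omega) _ t ht))) hL
  have hdA : ∀ i, 0 < i → i < m → defect φ L (combo m w '' cell m i i s t) = 0 := by
    intro i hi0 hi
    rw [image_cell le_rfl hi.le w hs ht]
    exact defect_eq_zero ((hsing _).add (isConvexBody_singleton _)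
      ((ih i hi w s hs).add (isConvexBody_poly i w hs) (ih _ (by omega) _ t ht))) hL
  have hdA0 : defect φ L (combo m w '' cell m 0 0 s t) = defect φ L (poly m w t) := by
    rw [image_cell le_rfl (Nat.zero_le m) w hs ht, poly_zero w hs]
    simp
  have hdAm : defect φ L (combo m w '' cell m m m s t) = defect φ L (poly m w s) := by
    rw [image_cell le_rfl le_rfl w hs ht, Nat.sub_self, poly_zero _ ht,
      defect_add_left (hsing _) hL (isConvexBody_add (isConvexBody_poly m w hs)
        (isConvexBody_singleton 0))]
    simp
  have hne : ∀ i, i < m → (B i ∩ {x | x i = t}).Nonempty := by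
    intro i hi
    refine ⟨fun j => if j < m then t else 0, ⟨⟨?_, ?_, ?_, ?_⟩, ?_⟩, ?_⟩
    · intro j
      dsimp only
      split_ifs <;> first | omega | linarith
    · intro j
      dsimp only
      split_ifs <;> linarith
    · intro j
      dsimp only
      split_ifs <;> linarith
    · intro j hj
      simp [Nat.not_lt.2 hj]
    · intro j hj
      simp [hj.trans hi]
    · simp [hi]
  have hstep : ∀ i, i < m → defect φ L (combo m w '' B i) =
      defect φ L (combo m w '' cell m i i s t) + defect φ L (combo m w '' B (i + 1)) := by
    intro i hi
    have := defect_cut hval hL (hBc i) (hBv i) m w i t (hne i hi)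
    rwa [hC, hA, hBs, hdC i hi, add_zero] at this
  have hBm : B m = cell m m m s t := by
    ext x
    constructor
    · rintro ⟨hx, h1⟩
      exact ⟨hx, h1, fun j hj hj' => by omega, fun j hj => by rw [hx.2.2.2 j hj]; exact ht⟩
    · rintro ⟨hx, h1, -⟩
      exact ⟨hx, h1⟩
  have hB0 : B 0 = chain m (s + t) := by
    ext x; simp [B]
  have hchain : ∀ i, 1 ≤ i → i ≤ m →
      defect φ L (combo m w '' B 1) = defect φ L (combo m w '' B i) := by
    intro i hi
    induction i, hi using Nat.le_induction with
    | base => intro _; rfl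
    | succ i hi IH =>
      intro him
      rw [IH (by omega), hstep i (by omega), hdA i (by omega) (by omega), zero_add]
  have h0 := hstep 0 hm
  rw [hB0, hdA0, zero_add, hchain m hm le_rfl, hBm, hdAm] at h0
  unfold poly at h0 ⊢
  rw [h0, add_comm]

/-- Every polytope `poly m w u` is a direction of additivity. The defect is additive in the
dilation factor, hence linear along integer multiples, while homogeneity and continuity make it
`o(k)`. -/
theorem isAdditiveAt_poly (hval : IsValuation φ) (hcont : ContinuousVal φ)
    (htrans : TransInvariant φ)
    (hhomog : ∀ K : Set (Euc n), IsConvexBody K → ∀ t : ℝ, 0 ≤ t → φ (t • K) = t * φ K)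
    (m : ℕ) : ∀ (w : ℕ → Euc n) (u : ℝ), 0 ≤ u → IsAdditiveAt φ (poly m w u) := by
  induction m using Nat.strong_induction_on with
  | _ m ih =>
  intro w u hu
  rcases Nat.eq_zero_or_pos m with rfl | hm
  · rw [poly_zero w hu]
    exact isAdditiveAt_singleton htrans hhomog 0
  intro L hL
  have hPb := isConvexBody_poly m w hu
  have hlin : ∀ k : ℕ, defect φ L (poly m w ((k + 1 : ℕ) * u)) =
      (k + 1 : ℕ) * defect φ L (poly m w u) := by
    intro k
    induction k with
    | zero => simp
    | succ k IH =>
      have e : ((k + 1 + 1 : ℕ) : ℝ) * u = (k + 1 : ℕ) * u + u := by push_cast; ring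
      rw [e, defect_poly_add hval htrans hhomog hm ih w hL (by positivity) hu, IH]
      push_cast; ring
  have hzero : defect φ L (poly m w u) = 0 := by
    by_contra hne
    have hpos : 0 < |defect φ L (poly m w u)| := abs_pos.2 hne
    obtain ⟨δ, hδ, hc⟩ := continuous_dilate hcont hPb hL (half_pos hpos)
    obtain ⟨k, hk⟩ := exists_nat_gt (max (1 / δ) (|φ L| / (|defect φ L (poly m w u)| / 2)))
    have hk1 : 1 / δ < (k + 1 : ℕ) := by
      push_cast; linarith [le_max_left (1 / δ) (|φ L| / (|defect φ L (poly m w u)| / 2))]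
    have hk2 : |φ L| / (|defect φ L (poly m w u)| / 2) < (k + 1 : ℕ) := by
      push_cast; linarith [le_max_right (1 / δ) (|φ L| / (|defect φ L (poly m w u)| / 2))]
    set c : ℝ := ((k + 1 : ℕ) : ℝ) with hcdef
    have hc0 : 0 < c := by rw [hcdef]; positivity
    have h1 := hc c⁻¹ (by positivity) (by
      rw [inv_lt_comm₀ hc0 hδ]; simpa using hk1)
    have h2 : φ (L + poly m w (c * u)) = c * φ (poly m w u + c⁻¹ • L) := by
      rw [← hhomog _ (isConvexBody_add hPb (isConvexBody_smul hL _)) c hc0.le, smul_add,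
        smul_inv_smul₀ hc0.ne', poly_mul m w hc0, add_comm]
    have h3 := hlin k
    rw [← hcdef] at h3
    have h4 : c * defect φ L (poly m w u) =
        c * (φ (poly m w u + c⁻¹ • L) - φ (poly m w u)) - φ L := by
      rw [← h3, defect, h2, poly_mul m w hc0, hhomog _ hPb c hc0.le]; ring
    have h5 : |φ L| < c * (|defect φ L (poly m w u)| / 2) := by
      rwa [div_lt_iff₀ (half_pos hpos)] at hk2
    have h6 : c * |defect φ L (poly m w u)| ≤
        c * |φ (poly m w u + c⁻¹ • L) - φ (poly m w u)| + |φ L| := by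
      have := congrArg abs h4
      rw [abs_mul, abs_of_pos hc0] at this
      rw [this]
      refine (abs_sub _ _).trans ?_
      rw [abs_mul, abs_of_pos hc0]
    have h7 := mul_lt_mul_of_pos_left h1 hc0
    linarith
  unfold defect at hzero
  linarith

/-- A convex body contains a translate of some `poly m w 1` that is dense in it up to `r`. -/
theorem exists_poly_approx {K : Set (Euc n)} (hK : IsConvexBody K) {r : ℝ} (hr : 0 < r) :
    ∃ (v : Euc n) (m : ℕ) (w : ℕ → Euc n), {v} + poly m w 1 ⊆ K ∧
      K ⊆ ({v} + poly m w 1) + r • Metric.closedBall (0 : Euc n) 1 := by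
  obtain ⟨T, hTK, hTf, hTc⟩ := hK.2.1.finite_cover_balls hr
  obtain ⟨x₀, hx₀⟩ := hK.1
  let l := hTf.toFinset.toList
  let p : ℕ → Euc n := fun i => l.getD i x₀
  have hpK : ∀ i, p i ∈ K := by
    intro i
    by_cases hi : i < l.length
    · have : p i = l[i] := by simp [p, hi]
      rw [this]
      apply hTK
      exact hTf.mem_toFinset.1 (Finset.mem_toList.1 (List.getElem_mem hi))
    · have : p i = x₀ := by simp [p, Nat.not_lt.1 hi]
      rwa [this]
  have hpT : ∀ x ∈ T, ∃ i < l.length, p i = x := by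
    intro x hx
    have hxl : x ∈ l := by simpa [l] using hx
    obtain ⟨i, hi, h⟩ := List.mem_iff_getElem.1 hxl
    exact ⟨i, hi, by simp [p, hi, h]⟩
  let w : ℕ → Euc n := fun i => p (i + 1) - p i
  refine ⟨p 0, l.length, w, ?_, ?_⟩
  · rintro _ ⟨_, rfl, _, ⟨x, ⟨hx1, hx2, hx3, hx4⟩, rfl⟩, rfl⟩
    -- summation by parts writes the point as a convex combination of the `p i`
    let y : ℕ → ℝ := fun i => Nat.casesOn i 1 x
    have habel : ∀ m, p 0 + combo m w x =
        ∑ i ∈ Finset.range m, (y i - y (i + 1)) • p i + y m • p m := by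
      intro m
      rw [combo_apply]
      induction m with
      | zero => simp [y]
      | succ m IH =>
        rw [Finset.sum_range_succ, ← add_assoc, IH, Finset.sum_range_succ]
        have : y (m + 1) = x m := rfl
        simp only [this, w, smul_sub, sub_smul]
        abel
    have hlast : y (l.length + 1) = 0 := hx4 _ le_rfl
    have hmem : p 0 + combo l.length w x =
        ∑ i ∈ Finset.range (l.length + 1), (y i - y (i + 1)) • p i := by
      rw [habel, Finset.sum_range_succ, hlast, sub_zero]
    change p 0 + combo l.length w x ∈ K
    rw [hmem]
    refine hK.2.2.sum_mem (fun i _ => ?_) ?_ (fun i _ => hpK i)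
    · rcases i with _ | i
      · exact sub_nonneg.2 (hx3 0)
      · exact sub_nonneg.2 (hx1 i)
    · rw [Finset.sum_range_sub', hlast]
      simp [y]
  · intro z hz
    obtain ⟨q, hq, hzq⟩ := Set.mem_iUnion₂.1 (hTc hz)
    obtain ⟨i, hi, rfl⟩ := hpT q hq
    refine ⟨p i, ⟨p 0, rfl, p i - p 0, ⟨fun j => if j < i then 1 else 0, ⟨?_, ?_, ?_, ?_⟩, ?_⟩,
      by simp⟩, z - p i, ?_, by simp⟩
    · intro j
      dsimp only
      split_ifs <;> first | omega | norm_num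
    · intro j
      dsimp only
      split_ifs <;> norm_num
    · intro j
      dsimp only
      split_ifs <;> norm_num
    · intro j hj
      have : ¬ j < i := by omega
      simp [this]
    · rw [combo_apply, ← Finset.sum_range_sub]
      simp only [ite_smul, one_smul, zero_smul]
      rw [← Finset.sum_filter]
      refine Finset.sum_congr ?_ fun _ _ => rfl
      ext j; simp; omega
    · rw [smul_unitClosedBall_of_nonneg hr.le, mem_closedBall_zero_iff, ← dist_eq_norm]
      exact (Metric.mem_ball.1 hzq).le

/-- Minkowski additivity: polytopes approximating `K` from inside are directions of additivity,
and monotonicity sandwiches `φ (K + L)`. -/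
theorem map_add (hval : IsValuation φ) (hcont : ContinuousVal φ)
    (htrans : TransInvariant φ) (hmono : MonotoneVal φ)
    (hhomog : ∀ K : Set (Euc n), IsConvexBody K → ∀ t : ℝ, 0 ≤ t → φ (t • K) = t * φ K)
    {K L : Set (Euc n)} (hK : IsConvexBody K) (hL : IsConvexBody L) :
    φ (K + L) = φ K + φ L := by
  set B := Metric.closedBall (0 : Euc n) 1 with hB
  have hBb : IsConvexBody B := isConvexBody_unitBall
  have hclose : ∀ ε : ℝ, 0 < ε → |φ (K + L) - (φ K + φ L)| ≤ ε := by
    intro ε hε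
    obtain ⟨δ₁, hδ₁, h₁⟩ := continuous_dilate hcont hL hBb hε
    obtain ⟨δ₂, hδ₂, h₂⟩ := continuous_dilate hcont (isConvexBody_singleton 0) hBb hε
    obtain ⟨r, hr, hr'⟩ := exists_between (lt_min hδ₁ hδ₂)
    have hLr := (abs_lt.1 (h₁ r hr.le (hr'.trans_le (min_le_left _ _)))).2
    have hBr := (abs_lt.1 (h₂ r hr.le (hr'.trans_le (min_le_right _ _)))).2
    rw [map_zero_singleton hhomog, Set.singleton_zero, zero_add] at hBr
    obtain ⟨v, m, w, hPK, hKP⟩ := exists_poly_approx hK hr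
    have hQb := isConvexBody_poly m w zero_le_one
    have hPb := isConvexBody_add (isConvexBody_singleton v) hQb
    have hPa : IsAdditiveAt φ ({v} + poly m w 1) :=
      (isAdditiveAt_singleton htrans hhomog v).add (isConvexBody_singleton v)
        (isAdditiveAt_poly hval hcont htrans hhomog m w 1 zero_le_one)
    set P := {v} + poly m w 1 with hP
    have hrB := isConvexBody_smul hBb r
    have a1 : φ P + φ L ≤ φ (K + L) := by
      rw [add_comm (φ P), ← hPa L hL, add_comm L]
      exact hmono _ _ (isConvexBody_add hPb hL) (isConvexBody_add hK hL)
        (Set.add_subset_add_right hPK)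
    have a2 : φ (K + L) ≤ φ (L + r • B) + φ P := by
      rw [← hPa _ (isConvexBody_add hL hrB)]
      refine hmono _ _ (isConvexBody_add hK hL)
        (isConvexBody_add (isConvexBody_add hL hrB) hPb) ?_
      refine (Set.add_subset_add_right hKP).trans (le_of_eq ?_)
      abel
    have a3 : φ P ≤ φ K := hmono _ _ hPb hK hPK
    have a4 : φ K ≤ φ (r • B) + φ P := by
      rw [← hPa _ hrB, add_comm (r • B)]
      exact hmono _ _ hK (isConvexBody_add hPb hrB) hKP
    rw [abs_le]
    constructor <;> linarith
  have : |φ (K + L) - (φ K + φ L)| ≤ 0 :=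
    le_of_forall_pos_le_add fun ε hε => by simpa using hclose ε hε
  exact sub_eq_zero.1 (abs_eq_zero.1 (le_antisymm this (abs_nonneg _)))

end Additivity

/-! ### The triangle inequality and definiteness -/

/-- `(K ∨ L) + M ⊆ (K ∨ M) + (M ∨ L)`: for `a + b = 1`, the point `a k + b l + m` is
`(a k + b m) + (a m + b l)`. -/
theorem join_add_subset {n : ℕ} {K L M : Set (Euc n)} (hK : IsConvexBody K)
    (hL : IsConvexBody L) :
    convexHull ℝ (K ∪ L) + M ⊆ convexHull ℝ (K ∪ M) + convexHull ℝ (M ∪ L) := by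
  rintro _ ⟨x, hx, z, hz, rfl⟩
  rw [hK.2.2.convexHull_union hL.2.2 hK.1 hL.1, mem_convexJoin] at hx
  obtain ⟨k, hk, l, hl, a, b, ha, hb, hab, rfl⟩ := hx
  have mem : ∀ {S : Set (Euc n)} {y}, y ∈ S → y ∈ convexHull ℝ S :=
    fun h => subset_convexHull ℝ _ h
  refine ⟨a • k + b • z, convex_convexHull ℝ _ (mem (Or.inl hk)) (mem (Or.inr hz)) ha hb hab,
    a • z + b • l, convex_convexHull ℝ _ (mem (Or.inl hz)) (mem (Or.inr hl)) ha hb hab, ?_⟩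
  calc a • k + b • z + (a • z + b • l) = a • k + b • l + (a + b) • z := by
        rw [add_smul]; abel
    _ = a • k + b • l + z := by rw [hab, one_smul]

theorem one_le_affDim {n : ℕ} {K : Set (Euc n)} (hK : ¬ K.Subsingleton) : 1 ≤ affDim K := by
  unfold affDim
  rw [direction_affineSpan, Nat.one_le_iff_ne_zero, Ne, Submodule.finrank_eq_zero,
    vectorSpan_eq_bot_iff_subsingleton]
  exact hK

/-- Under `1`-strict monotonicity, a body is determined by its value inside a larger one; when the
smaller body is a point, the comparison is with `∅` instead. -/
theorem eq_of_subset_of_map_eq {n : ℕ} {φ : Set (Euc n) → ℝ} (hempty : φ ∅ = 0)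
    (hpoint : ∀ v : Euc n, φ {v} = 0) (hstrict : KStrictMono 1 φ) {K L : Set (Euc n)}
    (hK : IsConvexBody K) (hL : IsConvexBody L) (hKL : K ⊆ L) (heq : φ K = φ L) : K = L := by
  by_contra hne
  have hss : K ⊂ L := hKL.ssubset_of_ne hne
  have hLs : ¬ L.Subsingleton := by
    intro h
    obtain ⟨x, hx⟩ := hK.1
    exact hne (hKL.antisymm fun y hy => h (hKL hx) hy ▸ hx)
  have hL1 : IsBody 1 L := ⟨hL, one_le_affDim hLs⟩
  by_cases hKs : K.Subsingleton
  · obtain ⟨x, hx⟩ := hK.1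
    have hKx : K = {x} := hKs.eq_singleton_of_mem hx
    have := hstrict ∅ L (Or.inr rfl) (Or.inl hL1) (Set.empty_ssubset.2 hL.1)
    rw [hempty, ← heq, hKx, hpoint] at this
    exact lt_irrefl _ this
  · exact (hstrict K L (Or.inl ⟨hK, one_le_affDim hKs⟩) (Or.inl hL1) hss).ne heq

end JoinDeviation

/-- For a continuous, translation-invariant, monotone, `1`-homogeneous
valuation, the join-deviation `ρ_φ` is symmetric, nonnegative, and satisfies the triangle
inequality on `K^n`; if `φ` is moreover `1`-strictly monotone, then `ρ_φ(K,L) = 0` implies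
`K = L`, i.e. `ρ_φ` is a metric on `K^n`. -/
theorem joinDev_is_metric (n : ℕ) (φ : Set (Euc n) → ℝ)
    (hval : IsValuation φ) (hcont : ContinuousVal φ) (htrans : TransInvariant φ)
    (hmono : MonotoneVal φ)
    (hhomog : ∀ K : Set (Euc n), IsConvexBody K → ∀ t : ℝ, 0 ≤ t → φ (t • K) = t * φ K) :
    (∀ K L : Set (Euc n), IsConvexBody K → IsConvexBody L →
      JoinDev φ K L = JoinDev φ L K) ∧
    (∀ K L : Set (Euc n), IsConvexBody K → IsConvexBody L →
      0 ≤ JoinDev φ K L) ∧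
    (∀ K L M : Set (Euc n), IsConvexBody K → IsConvexBody L → IsConvexBody M →
      JoinDev φ K L ≤ JoinDev φ K M + JoinDev φ M L) ∧
    (KStrictMono 1 φ →
      ∀ K L : Set (Euc n), IsConvexBody K → IsConvexBody L →
        JoinDev φ K L = 0 → K = L) := by
  have hpoint := JoinDeviation.map_singleton htrans hhomog
  have hleft : ∀ K L : Set (Euc n), IsConvexBody K → IsConvexBody L →
      φ K ≤ φ (convexHull ℝ (K ∪ L)) := fun K L hK hL =>
    hmono _ _ hK (JoinDeviation.isConvexBody_join hK hL)
      (Set.subset_union_left.trans (subset_convexHull ℝ _))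
  have hright : ∀ K L : Set (Euc n), IsConvexBody K → IsConvexBody L →
      φ L ≤ φ (convexHull ℝ (K ∪ L)) := fun K L hK hL =>
    hmono _ _ hL (JoinDeviation.isConvexBody_join hK hL)
      (Set.subset_union_right.trans (subset_convexHull ℝ _))
  refine ⟨fun K L _ _ => ?_, fun K L hK hL => ?_, fun K L M hK hL hM => ?_,
    fun hstrict K L hK hL h0 => ?_⟩
  · unfold JoinDev
    rw [Set.union_comm]; ring
  · unfold JoinDev
    linarith [hleft K L hK hL, hright K L hK hL]
  · have hKL := JoinDeviation.isConvexBody_join hK hL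
    have hKM := JoinDeviation.isConvexBody_join hK hM
    have hML := JoinDeviation.isConvexBody_join hM hL
    have h := hmono _ _ (JoinDeviation.isConvexBody_add hKL hM)
      (JoinDeviation.isConvexBody_add hKM hML) (JoinDeviation.join_add_subset hK hL)
    rw [JoinDeviation.map_add hval hcont htrans hmono hhomog hKL hM,
      JoinDeviation.map_add hval hcont htrans hmono hhomog hKM hML] at h
    unfold JoinDev
    linarith
  · unfold JoinDev at h0
    have h1 := hleft K L hK hL
    have h2 := hright K L hK hL
    have hKL := JoinDeviation.isConvexBody_join hK hL
    have e1 := JoinDeviation.eq_of_subset_of_map_eq hval.1 hpoint hstrict hK hKL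
      (Set.subset_union_left.trans (subset_convexHull ℝ _)) (by linarith)
    have e2 := JoinDeviation.eq_of_subset_of_map_eq hval.1 hpoint hstrict hL hKL
      (Set.subset_union_right.trans (subset_convexHull ℝ _)) (by linarith)
    exact e1.trans e2.symm
end
end

section
/- Let K, L ∈ K^n_n be convex bodies in ℝ^n with nonempty interior. Then there exists a map γ : [0,1] → K^n_n with γ(0) = K and γ(1) = L that is continuous with respect to Δ_Vol (for every t ∈ [0,1] and ε > 0 there is δ > 0 with Δ_Vol(γ(s), γ(t)) < ε whenever |s − t| < δ) and is a shortest path of length Δ_Vol(K,L), meaning that for every partition 0 = p_0 < p_1 < ⋯ < p_N = 1 one has Σ_{i=1}^N Δ_Vol(γ(p_{i−1}), γ(p_i)) = Δ_Vol(K,L), if and only if there exists a bridging body M ∈ K^n_n such that Vol((K ∩ L) \ M) = 0, Vol(M \ (K ∪ L)) = 0, and both M ∩ K and M ∩ L are convex bodies with nonempty interior. -/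
/-!
The proof rests on one identity: for bodies `A, B, C`,
`Δ(A,B) + Δ(B,C) - Δ(A,C) = 2 (Vol((A ∩ C) \ B) + Vol(B \ (A ∪ C)))` (`DVol_defect`).
It yields the triangle inequality, and equality in it holds exactly when `A ∩ C ⊆ B ⊆ A ∪ C` up
to null sets.

*A shortest path yields a bridging body.* Every `γ t` lies between `K` and `L` in the above sense,
so `Vol(γ t) ≤ Vol(γ t ∩ K) + Vol(γ t ∩ L)`. The function
`t ↦ Vol(γ t ∩ K) - Vol(γ t ∩ L)` is continuous, nonnegative at `0` and nonpositive at `1`. At a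
zero of it both intersections have the same, hence positive, volume; a convex set of positive
volume has nonempty interior, so `M = γ t` is a bridging body.

*A bridging body yields a shortest path.* The path runs through `K`, `K ∩ M`, `M`, `M ∩ L`, `L`.
Two nested bodies `A ⊆ B` are joined by the increasing path `B ∩ h_c(A)`, where `h_c` is the
homothety of ratio `c ≥ 1` about an interior point of `A`
(`GeoJoined.of_subset`). The deviations of the four legs add up to `Δ(K, L)` by the identity, and
concatenating geodesics with additive lengths gives a geodesic (`GeoJoined.trans`).
-/

open scoped Pointwise
open MeasureTheory

noncomputable section

/-- Membership in `K^n_n`: a convex body with nonempty interior. -/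
def IsBodyN {n : ℕ} (K : Set (Euc n)) : Prop :=
  IsConvexBody K ∧ (interior K).Nonempty

/-- The symmetric difference (volume) deviation `Δ_Vol`. -/
def DVol {n : ℕ} (K L : Set (Euc n)) : ℝ :=
  (volume K).toReal + (volume L).toReal - 2 * (volume (K ∩ L)).toReal

/-- `γ : [0,1] → K^n_n` is a shortest path from `K` to `L` for `Δ_Vol`: it takes values in
`K^n_n`, has the prescribed endpoints, is continuous with respect to `Δ_Vol`, and every
partition sum of consecutive deviations equals `Δ_Vol(K, L)`. -/
def IsShortestDVolPath {n : ℕ} (K L : Set (Euc n)) (γ : ℝ → Set (Euc n)) : Prop :=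
  (∀ t ∈ Set.Icc (0:ℝ) 1, IsBodyN (γ t)) ∧
  γ 0 = K ∧ γ 1 = L ∧
  (∀ t ∈ Set.Icc (0:ℝ) 1, ∀ ε : ℝ, 0 < ε → ∃ δ : ℝ, 0 < δ ∧
    ∀ s ∈ Set.Icc (0:ℝ) 1, |s - t| < δ → DVol (γ s) (γ t) < ε) ∧
  (∀ (N : ℕ) (p : ℕ → ℝ), 0 < N → p 0 = 0 → p N = 1 →
    (∀ i < N, p i < p (i + 1)) → (∀ i ≤ N, p i ∈ Set.Icc (0:ℝ) 1) →
    ∑ i ∈ Finset.range N, DVol (γ (p i)) (γ (p (i + 1))) = DVol K L)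

/-! ### The deviation as a metric -/

section Deviation

variable {n : ℕ} {A B C : Set (Euc n)}

lemma IsBodyN.measurableSet (h : IsBodyN A) : MeasurableSet A := h.1.2.1.measurableSet

lemma IsBodyN.volume_ne_top (h : IsBodyN A) : volume A ≠ ⊤ := h.1.2.1.measure_ne_top

lemma IsBodyN.volume_pos (h : IsBodyN A) : 0 < volume.real A :=
  ENNReal.toReal_pos (Measure.measure_pos_of_nonempty_interior _ h.2).ne' h.volume_ne_top

lemma DVol_comm (A B : Set (Euc n)) : DVol A B = DVol B A := by
  unfold DVol; rw [Set.inter_comm]; ring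

lemma DVol_self (A : Set (Euc n)) : DVol A A = 0 := by
  unfold DVol; rw [Set.inter_self]; ring

lemma DVol_of_subset (h : A ⊆ B) : DVol A B = volume.real B - volume.real A := by
  unfold DVol; rw [Set.inter_eq_left.2 h]; simp only [measureReal_def]; ring

/-- Inclusion-exclusion for `B ∩ (A ∪ C)`; the right-hand side measures how far `B` is from lying
between `A ∩ C` and `A ∪ C`. -/
lemma volume_defect (hA : IsBodyN A) (hB : IsBodyN B) (hC : IsBodyN C) :
    volume.real B + volume.real (A ∩ C) - volume.real (A ∩ B) - volume.real (B ∩ C) =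
      volume.real ((A ∩ C) \ B) + volume.real (B \ (A ∪ C)) := by
  have hfin : ∀ s : Set (Euc n), volume (B ∩ s) ≠ ⊤ := fun s =>
    measure_ne_top_of_subset Set.inter_subset_left hB.volume_ne_top
  have h1 := measureReal_inter_add_sdiff (μ := volume) (s := B)
    (hA.measurableSet.union hC.measurableSet) hB.volume_ne_top
  have h2 := measureReal_inter_add_sdiff (μ := volume) (s := A ∩ C) hB.measurableSet
    (measure_ne_top_of_subset Set.inter_subset_left hA.volume_ne_top)
  have h3 := measureReal_union_add_inter (μ := volume) (s := B ∩ A)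
    (hB.measurableSet.inter hC.measurableSet) (hfin A) (hfin C)
  rw [← Set.inter_union_distrib_left] at h3
  have h4 : (B ∩ A) ∩ (B ∩ C) = (A ∩ C) ∩ B := by ext; simp; tauto
  rw [h4, Set.inter_comm B A] at h3
  linarith

/-- The defect in the triangle inequality for `DVol`. -/
lemma DVol_defect (hA : IsBodyN A) (hB : IsBodyN B) (hC : IsBodyN C) :
    DVol A B + DVol B C - DVol A C =
      2 * (volume.real ((A ∩ C) \ B) + volume.real (B \ (A ∪ C))) := by
  rw [← volume_defect hA hB hC]
  simp only [DVol, measureReal_def]; ring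

lemma DVol_triangle (hA : IsBodyN A) (hB : IsBodyN B) (hC : IsBodyN C) :
    DVol A C ≤ DVol A B + DVol B C := by
  have := DVol_defect hA hB hC
  have h1 : 0 ≤ volume.real ((A ∩ C) \ B) := measureReal_nonneg
  have h2 : 0 ≤ volume.real (B \ (A ∪ C)) := measureReal_nonneg
  linarith

lemma DVol_add_iff (hA : IsBodyN A) (hB : IsBodyN B) (hC : IsBodyN C) :
    DVol A B + DVol B C = DVol A C ↔
      volume ((A ∩ C) \ B) = 0 ∧ volume (B \ (A ∪ C)) = 0 := by
  have := DVol_defect hA hB hC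
  have h1 : 0 ≤ volume.real ((A ∩ C) \ B) := measureReal_nonneg
  have h2 : 0 ≤ volume.real (B \ (A ∪ C)) := measureReal_nonneg
  have f1 : volume ((A ∩ C) \ B) ≠ ⊤ := measure_ne_top_of_subset
    (Set.sdiff_subset.trans Set.inter_subset_left) hA.volume_ne_top
  have f2 : volume (B \ (A ∪ C)) ≠ ⊤ := measure_ne_top_of_subset Set.sdiff_subset hB.volume_ne_top
  rw [← measureReal_eq_zero_iff f1, ← measureReal_eq_zero_iff f2]
  constructor
  · intro h; constructor <;> linarith
  · rintro ⟨h, h'⟩; linarith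

/-- The volume of the intersection with a fixed body is `1`-Lipschitz for `DVol`. -/
lemma abs_volume_inter_sub_le (hA : IsBodyN A) (hB : IsBodyN B) (hC : IsBodyN C) :
    |volume.real (A ∩ C) - volume.real (B ∩ C)| ≤ DVol A B := by
  have key : ∀ {X Y : Set (Euc n)}, IsBodyN X → IsBodyN Y →
      volume.real (X ∩ C) - volume.real (Y ∩ C) ≤ volume.real X - volume.real (X ∩ Y) := by
    intro X Y hX hY
    have := volume_defect hY hX hC
    have h1 : 0 ≤ volume.real ((Y ∩ C) \ X) := measureReal_nonneg
    have h2 : 0 ≤ volume.real (X \ (Y ∪ C)) := measureReal_nonneg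
    rw [Set.inter_comm Y X] at this
    linarith
  have hAB : volume.real (A ∩ B) ≤ volume.real A :=
    measureReal_mono Set.inter_subset_left hA.volume_ne_top
  have hBA : volume.real (A ∩ B) ≤ volume.real B :=
    measureReal_mono Set.inter_subset_right hB.volume_ne_top
  have h1 := key hA hB
  have h2 := key hB hA
  rw [Set.inter_comm B A] at h2
  have hD : DVol A B = volume.real A + volume.real B - 2 * volume.real (A ∩ B) := rfl
  rw [abs_le]
  constructor <;> linarith

lemma IsBodyN.inter_of_volume_pos (hA : IsBodyN A) (hB : IsBodyN B)
    (h : 0 < volume.real (A ∩ B)) : IsBodyN (A ∩ B) := by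
  have hc : Convex ℝ (A ∩ B) := hA.1.2.2.inter hB.1.2.2
  have hpos : volume (A ∩ B) ≠ 0 := fun h0 => by simp [measureReal_def, h0] at h
  refine ⟨⟨nonempty_of_measure_ne_zero hpos, hA.1.2.1.inter hB.1.2.1, hc⟩, ?_⟩
  -- The boundary of a convex set is null, so the interior carries the full volume.
  have hle : volume (A ∩ B) ≤ volume (interior (A ∩ B)) + volume (frontier (A ∩ B)) :=
    (measure_mono (subset_closure.trans (closure_eq_interior_union_frontier _).subset)).trans
      (measure_union_le _ _)
  rw [hc.addHaar_frontier volume, add_zero] at hle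
  exact nonempty_of_measure_ne_zero fun h0 => hpos (le_antisymm (h0 ▸ hle) bot_le)

end Deviation

/-! ### Geodesics between bodies -/

/-- `K` and `L` are joined by a path of bodies along which the deviation `DVol` is the increment of
a continuous function `f`, the arc length up to a constant. For convenience `f` is continuous on
all of `ℝ`, although only its values on `[0, 1]` matter. -/
def GeoJoined {n : ℕ} (K L : Set (Euc n)) : Prop :=
  ∃ (γ : ℝ → Set (Euc n)) (f : ℝ → ℝ), Continuous f ∧ γ 0 = K ∧ γ 1 = L ∧
    (∀ t ∈ Set.Icc (0 : ℝ) 1, IsBodyN (γ t)) ∧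
    ∀ s ∈ Set.Icc (0 : ℝ) 1, ∀ t ∈ Set.Icc (0 : ℝ) 1, s ≤ t → DVol (γ s) (γ t) = f t - f s

section Geodesics

variable {n : ℕ} {A B C : Set (Euc n)}

lemma GeoJoined.exists_shortest (h : GeoJoined A B) : ∃ γ, IsShortestDVolPath A B γ := by
  obtain ⟨γ, f, hf, h0, h1, hb, hD⟩ := h
  refine ⟨γ, hb, h0, h1, ?_, ?_⟩
  · intro t ht ε hε
    obtain ⟨δ, hδ, H⟩ := Metric.continuous_iff.1 hf t ε hε
    refine ⟨δ, hδ, fun s hs hst => ?_⟩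
    have hd := H s hst
    rw [Real.dist_eq, abs_lt] at hd
    rcases le_total s t with h | h
    · rw [hD s hs t ht h]; linarith
    · rw [DVol_comm, hD t ht s hs h]; linarith
  · intro N p _ hp0 hpN hlt hp
    have : ∀ i ∈ Finset.range N, DVol (γ (p i)) (γ (p (i + 1))) = f (p (i + 1)) - f (p i) := by
      intro i hi
      rw [Finset.mem_range] at hi
      exact hD _ (hp i hi.le) _ (hp (i + 1) hi) (hlt i hi).le
    rw [Finset.sum_congr rfl this, Finset.sum_range_sub (fun i => f (p i)), hp0, hpN, ← h0, ← h1,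
      hD 0 (by simp) 1 (by simp) zero_le_one]

lemma GeoJoined.symm (h : GeoJoined A B) : GeoJoined B A := by
  obtain ⟨γ, f, hf, h0, h1, hb, hD⟩ := h
  have hI : ∀ t ∈ Set.Icc (0 : ℝ) 1, 1 - t ∈ Set.Icc (0 : ℝ) 1 := fun t ht =>
    ⟨by linarith [ht.2], by linarith [ht.1]⟩
  refine ⟨fun t => γ (1 - t), fun t => -f (1 - t), by fun_prop, by simpa using h1,
    by simpa using h0, fun t ht => hb _ (hI t ht), fun s hs t ht hst => ?_⟩
  rw [DVol_comm, hD _ (hI t ht) _ (hI s hs) (by linarith)]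
  ring

/-- Concatenation of geodesics whose lengths add up. -/
lemma GeoJoined.trans (h₁ : GeoJoined A B) (h₂ : GeoJoined B C)
    (hadd : DVol A B + DVol B C = DVol A C) : GeoJoined A C := by
  obtain ⟨γ, f, hf, h0, h1, hb, hD⟩ := h₁
  obtain ⟨η, g, hg, k0, k1, kb, kD⟩ := h₂
  have hmem1 : ∀ t ∈ Set.Icc (0 : ℝ) 1, t ≤ 1 / 2 → 2 * t ∈ Set.Icc (0 : ℝ) 1 :=
    fun t ht h => ⟨by linarith [ht.1], by linarith⟩
  have hmem2 : ∀ t ∈ Set.Icc (0 : ℝ) 1, ¬ t ≤ 1 / 2 → 2 * t - 1 ∈ Set.Icc (0 : ℝ) 1 :=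
    fun t ht h => ⟨by linarith [not_le.1 h], by linarith [ht.2]⟩
  have m0 : (0 : ℝ) ∈ Set.Icc (0 : ℝ) 1 := by simp
  have m1 : (1 : ℝ) ∈ Set.Icc (0 : ℝ) 1 := by simp
  refine ⟨fun t => if t ≤ 1 / 2 then γ (2 * t) else η (2 * t - 1),
    fun t => if t ≤ 1 / 2 then f (2 * t) else g (2 * t - 1) + (f 1 - g 0), ?_, ?_, ?_, ?_, ?_⟩
  · refine Continuous.if_le (by fun_prop) (by fun_prop) continuous_id continuous_const ?_
    rintro t rfl
    norm_num
  · simpa using h0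
  · norm_num; exact k1
  · intro t ht
    by_cases h : t ≤ 1 / 2
    · simpa only [if_pos h] using hb _ (hmem1 t ht h)
    · simpa only [if_neg h] using kb _ (hmem2 t ht h)
  · intro s hs t ht hst
    by_cases h : t ≤ 1 / 2
    · have h' : s ≤ 1 / 2 := hst.trans h
      simp only [if_pos h, if_pos h']
      exact hD _ (hmem1 s hs h') _ (hmem1 t ht h) (by linarith)
    by_cases h' : s ≤ 1 / 2
    · simp only [if_neg h, if_pos h']
      have ms := hmem1 s hs h'
      have mt := hmem2 t ht h
      -- The triangle inequality through `B` bounds the deviation above; the one from `A` to `C`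
      -- through both points bounds it below, as `hadd` makes the whole path shortest.
      have a1 := hD 0 m0 _ ms ms.1
      have a2 := hD _ ms 1 m1 ms.2
      have a3 := hD 0 m0 1 m1 zero_le_one
      have b1 := kD 0 m0 _ mt mt.1
      have b2 := kD _ mt 1 m1 mt.2
      have b3 := kD 0 m0 1 m1 zero_le_one
      have t1 := DVol_triangle (hb _ ms) (hb 1 m1) (kb _ mt)
      have t2 := DVol_triangle (hb 0 m0) (hb _ ms) (kb 1 m1)
      have t3 := DVol_triangle (hb _ ms) (kb _ mt) (kb 1 m1)
      rw [h0] at a1 a3 t2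
      rw [h1] at a2 a3 t1
      rw [k0] at b1 b3
      rw [k1] at b2 b3 t2 t3
      apply le_antisymm <;> linarith
    · simp only [if_neg h, if_neg h']
      rw [kD _ (hmem2 s hs h') _ (hmem2 t ht h) (by linarith)]
      ring

/-- Dilations of a convex set about one of its points increase with the ratio. -/
lemma homothety_image_mono (hA : Convex ℝ A) {a : Euc n} (ha : a ∈ A) {c d : ℝ} (hc : 0 < c)
    (hcd : c ≤ d) : AffineMap.homothety a c '' A ⊆ AffineMap.homothety a d '' A := by
  rintro _ ⟨y, hy, rfl⟩
  have hd : 0 < d := hc.trans_le hcd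
  refine ⟨AffineMap.homothety a (c / d) y, ?_, ?_⟩
  · rw [AffineMap.homothety_eq_lineMap]
    exact hA.lineMap_mem ha hy ⟨by positivity, (div_le_one hd).2 hcd⟩
  · rw [← AffineMap.homothety_mul_apply, mul_div_cancel₀ _ hd.ne']

/-- A body is absorbed by large dilations of a set about an interior point of it. -/
lemma exists_subset_homothety_image {a : Euc n} (ha : a ∈ interior A) (hB : IsCompact B) :
    ∃ R : ℝ, 0 ≤ R ∧ B ⊆ AffineMap.homothety a (1 + R) '' A := by
  obtain ⟨r, hr, hrA⟩ := Metric.isOpen_iff.1 isOpen_interior a ha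
  obtain ⟨ρ, hρ, hBρ⟩ := hB.isBounded.subset_ball_lt 0 a
  refine ⟨ρ / r, by positivity, fun x hx => ?_⟩
  have hc : 0 < 1 + ρ / r := by positivity
  refine ⟨AffineMap.homothety a (1 + ρ / r)⁻¹ x, interior_subset (hrA ?_), ?_⟩
  · have hx' : dist x a < ρ := hBρ hx
    rw [Metric.mem_ball, dist_homothety_center, Real.norm_of_nonneg (by positivity), dist_comm a x,
      inv_mul_lt_iff₀ hc]
    have : (1 + ρ / r) * r = r + ρ := by field_simp
    linarith
  · rw [← AffineMap.homothety_mul_apply, mul_inv_cancel₀ hc.ne', AffineMap.homothety_one]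
    rfl

/-- Nested bodies `A ⊆ B` are joined by intersecting `B` with growing dilations of `A`. The volume
of the dilation of ratio `c` is `c ^ n * Vol(A)`, which controls the growth of the intersection and
makes the path continuous. -/
lemma GeoJoined.of_subset (hA : IsBodyN A) (hB : IsBodyN B) (hAB : A ⊆ B) : GeoJoined A B := by
  obtain ⟨a, ha⟩ := hA.2
  have haA := interior_subset ha
  obtain ⟨R, hR, hBR⟩ := exists_subset_homothety_image ha hB.1.2.1
  -- The absolute value keeps the ratio at least `1` for every real parameter.
  set c : ℝ → ℝ := fun t => 1 + |t| * R with hc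
  have hc1 : ∀ t, 1 ≤ c t := fun t => by
    have : 0 ≤ |t| * R := by positivity
    simp only [hc]; linarith
  have hc0 : ∀ t, 0 < c t := fun t => one_pos.trans_le (hc1 t)
  set H : ℝ → Set (Euc n) := fun t => AffineMap.homothety a (c t) '' A with hH
  have hHmono : ∀ {s t}, c s ≤ c t → H s ⊆ H t := fun h =>
    homothety_image_mono hA.1.2.2 haA (hc0 _) h
  have hHcomp : ∀ t, IsCompact (H t) := fun t =>
    hA.1.2.1.image (AffineMap.continuous_of_finiteDimensional _)
  have hHone : ∀ {t}, c t = 1 → H t = A := fun h => by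
    simp [hH, h, AffineMap.homothety_one]
  have hAH : ∀ t, A ⊆ H t := fun t => by
    have h0 : c 0 = 1 := by simp [hc]
    rw [← hHone h0]
    exact hHmono (by rw [h0]; exact hc1 t)
  have hHvol : ∀ t, volume.real (H t) = c t ^ n * volume.real A := fun t => by
    simp only [hH, measureReal_def, Measure.addHaar_image_homothety, finrank_euclideanSpace,
      Fintype.card_fin, ENNReal.toReal_mul]
    rw [ENNReal.toReal_ofReal (abs_nonneg _), abs_of_pos (pow_pos (hc0 t) n)]
  have hbody : ∀ t, IsBodyN (B ∩ H t) := fun t =>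
    ⟨⟨⟨a, hAB haA, hAH t haA⟩, hB.1.2.1.inter (hHcomp t),
      hB.1.2.2.inter (hA.1.2.2.affine_image _)⟩,
      ⟨a, interior_mono (Set.subset_inter hAB (hAH t)) ha⟩⟩
  have hmono : ∀ {s t}, c s ≤ c t → volume.real (B ∩ H s) ≤ volume.real (B ∩ H t) := fun h =>
    measureReal_mono (Set.inter_subset_inter_right _ (hHmono h)) (hbody _).volume_ne_top
  have hgrow : ∀ {s t}, c s ≤ c t →
      volume.real (B ∩ H t) - volume.real (B ∩ H s) ≤ volume.real (H t) - volume.real (H s) := by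
    intro s t h
    rw [← measureReal_sdiff (Set.inter_subset_inter_right _ (hHmono h)) (hbody s).measurableSet
        (hbody t).volume_ne_top,
      ← measureReal_sdiff (hHmono h) (hHcomp s).measurableSet (hHcomp t).measure_ne_top]
    refine measureReal_mono ?_
      (measure_ne_top_of_subset Set.sdiff_subset (hHcomp t).measure_ne_top)
    rintro x ⟨⟨hxB, hxt⟩, hxs⟩
    exact ⟨hxt, fun h => hxs ⟨hxB, h⟩⟩
  have hdist : ∀ s t, dist (volume.real (B ∩ H s)) (volume.real (B ∩ H t)) ≤
      dist (volume.real (H s)) (volume.real (H t)) := by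
    have main : ∀ s t, c s ≤ c t → dist (volume.real (B ∩ H s)) (volume.real (B ∩ H t)) ≤
        dist (volume.real (H s)) (volume.real (H t)) := by
      intro s t h
      rw [dist_comm, Real.dist_eq, dist_comm, Real.dist_eq, abs_of_nonneg (sub_nonneg.2 (hmono h))]
      exact (hgrow h).trans (le_abs_self _)
    intro s t
    rcases le_total (c s) (c t) with h | h
    · exact main s t h
    · rw [dist_comm, dist_comm (volume.real (H s))]
      exact main t s h
  have hHcont : Continuous fun t => volume.real (H t) := by
    simp only [hHvol, hc]; fun_prop
  refine ⟨fun t => B ∩ H t, fun t => volume.real (B ∩ H t), ?_, ?_, ?_, fun t _ => hbody t, ?_⟩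
  · rw [continuous_iff_continuousAt]
    intro t
    exact tendsto_iff_dist_tendsto_zero.2 (squeeze_zero (fun _ => dist_nonneg)
      (fun s => hdist s t) (tendsto_iff_dist_tendsto_zero.1 hHcont.continuousAt))
  · simp only
    rw [hHone (by simp [hc])]
    exact Set.inter_eq_right.2 hAB
  · have : c 1 = 1 + R := by simp [hc]
    simp only [hH, this]
    exact Set.inter_eq_left.2 hBR
  · intro s hs t ht hst
    refine DVol_of_subset (Set.inter_subset_inter_right _ (hHmono ?_))
    simp only [hc, abs_of_nonneg hs.1, abs_of_nonneg ht.1]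
    gcongr

/-- Two bodies whose intersection has nonempty interior are joined through that intersection. -/
lemma GeoJoined.of_inter (hA : IsBodyN A) (hB : IsBodyN B) (hAB : IsBodyN (A ∩ B)) :
    GeoJoined A B := by
  refine (GeoJoined.of_subset hAB hA Set.inter_subset_left).symm.trans
    (GeoJoined.of_subset hAB hB Set.inter_subset_right) ((DVol_add_iff hA hAB hB).2 ⟨?_, ?_⟩)
  · simp
  · rw [Set.sdiff_eq_empty.2 (Set.inter_subset_left.trans Set.subset_union_left), measure_empty]

end Geodesics

/-! ### Shortest paths and bridging bodies -/

/-- Every point of a shortest path lies between the endpoints for `DVol`. -/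
lemma IsShortestDVolPath.add_eq {n : ℕ} {K L : Set (Euc n)} {γ : ℝ → Set (Euc n)}
    (h : IsShortestDVolPath K L γ) {t : ℝ} (ht : t ∈ Set.Icc (0 : ℝ) 1) :
    DVol K (γ t) + DVol (γ t) L = DVol K L := by
  obtain ⟨-, h0, h1, -, hsum⟩ := h
  rcases ht.1.eq_or_lt with rfl | ht0
  · rw [h0, DVol_self, zero_add]
  rcases ht.2.eq_or_lt with rfl | ht1
  · rw [h1, DVol_self, add_zero]
  have := hsum 2 (fun i => if i = 0 then 0 else if i = 1 then t else 1) two_pos (by simp)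
    (by simp) (fun i hi => by interval_cases i <;> simpa)
    (fun i hi => by interval_cases i <;> simp [ht0.le, ht1.le])
  simpa [Finset.sum_range_succ, h0, h1] using this

/-- The volume of the intersection with a fixed body is continuous along a shortest path. -/
lemma IsShortestDVolPath.continuousOn_inter {n : ℕ} {K L C : Set (Euc n)} {γ : ℝ → Set (Euc n)}
    (h : IsShortestDVolPath K L γ) (hC : IsBodyN C) :
    ContinuousOn (fun t => volume.real (γ t ∩ C)) (Set.Icc 0 1) := by
  rw [Metric.continuousOn_iff]
  intro t ht ε hε
  obtain ⟨δ, hδ, H⟩ := h.2.2.2.1 t ht ε hε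
  exact ⟨δ, hδ, fun s hs hst =>
    (abs_volume_inter_sub_le (h.1 s hs) (h.1 t ht) hC).trans_lt (H s hs hst)⟩

/-- Full-dimensional convex bodies `K, L` are joined by a shortest path
for `Δ_Vol` iff there is a bridging body `M ∈ K^n_n` with `K ∩ L ⊆ M ⊆ K ∪ L` up to null
sets and `M ∩ K, M ∩ L ∈ K^n_n`. -/
theorem shortest_path_iff_bridging_body (n : ℕ) (K L : Set (Euc n))
    (hK : IsBodyN K) (hL : IsBodyN L) :
    (∃ γ : ℝ → Set (Euc n), IsShortestDVolPath K L γ) ↔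
    (∃ M : Set (Euc n), IsBodyN M ∧
      volume ((K ∩ L) \ M) = 0 ∧ volume (M \ (K ∪ L)) = 0 ∧
      IsBodyN (M ∩ K) ∧ IsBodyN (M ∩ L)) := by
  constructor
  · rintro ⟨γ, hγ⟩
    have hcont := (hγ.continuousOn_inter hK).sub (hγ.continuousOn_inter hL)
    have hK0 : volume.real (K ∩ L) ≤ volume.real K :=
      measureReal_mono Set.inter_subset_left hK.volume_ne_top
    have hL0 : volume.real (L ∩ K) ≤ volume.real L :=
      measureReal_mono Set.inter_subset_left hL.volume_ne_top
    have hmem : (0 : ℝ) ∈ (fun t => volume.real (γ t ∩ K) - volume.real (γ t ∩ L)) ''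
        Set.Icc 0 1 := by
      refine intermediate_value_Icc' zero_le_one hcont ⟨?_, ?_⟩
      · simp only [Pi.sub_apply, hγ.2.2.1, Set.inter_self]; linarith
      · simp only [Pi.sub_apply, hγ.2.1, Set.inter_self]; linarith
    obtain ⟨t, ht, h0⟩ := hmem
    have hb := hγ.1 t ht
    have hbet := (DVol_add_iff hK hb hL).1 (hγ.add_eq ht)
    have hdef := volume_defect hK hb hL
    rw [measureReal_def _ ((K ∩ L) \ γ t), measureReal_def _ (γ t \ (K ∪ L)), hbet.1, hbet.2,
      Set.inter_comm K (γ t)] at hdef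
    have hpos := hb.volume_pos
    have hnn : 0 ≤ volume.real (K ∩ L) := measureReal_nonneg
    simp only [ENNReal.toReal_zero] at hdef h0
    exact ⟨γ t, hb, hbet.1, hbet.2, hb.inter_of_volume_pos hK (by linarith),
      hb.inter_of_volume_pos hL (by linarith)⟩
  · rintro ⟨M, hM, h1, h2, hMK, hML⟩
    exact ((GeoJoined.of_inter hM hK hMK).symm.trans (GeoJoined.of_inter hM hL hML)
      ((DVol_add_iff hK hM hL).2 ⟨h1, h2⟩)).exists_shortest
end
end

section
/- Let K, L ∈ K^n_n be convex bodies in ℝ^n with nonempty interior such that K ∩ L = ∅. Then there is no shortest path joining K and L: there is no map γ : [0,1] → K^n_n with γ(0) = K, γ(1) = L, continuous with respect to Δ_Vol (for every t ∈ [0,1] and ε > 0 there is δ > 0 with Δ_Vol(γ(s), γ(t)) < ε whenever |s − t| < δ), such that Σ_{i=1}^N Δ_Vol(γ(p_{i−1}), γ(p_i)) = Δ_Vol(K,L) for every partition 0 = p_0 < p_1 < ⋯ < p_N = 1. In particular (K^n_n, Δ_Vol) is not a geodesic space. -/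
/-!
If `M` lies metrically between `K` and `L`, then, since `K ∩ L = ∅`, the additivity
`Δ(K, M) + Δ(M, L) = Δ(K, L)` says `Vol M = Vol (M ∩ K) + Vol (M ∩ L)`, so `M ⊆ K ∪ L` up to a
null set. The open set `interior M \ (K ∪ L)` is therefore empty, and as `interior M` is connected
while `K` and `L` are disjoint and closed, `M = closure (interior M)` lies in one of them
(`subset_or_subset_of_DVol_add`). Along a shortest path every body thus lies in `K` or in `L`.
Two bodies on different sides are disjoint, so their distance is the sum of their volumes;
by continuity the side is locally constant on `[0, 1]`, hence constant, although the path starts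
at `K` and ends at `L`.
-/

open scoped Pointwise
open MeasureTheory

noncomputable section

theorem volume_toReal_pos {n : ℕ} {K : Set (Euc n)} (hK : IsBodyN K) :
    0 < (volume K).toReal :=
  ENNReal.toReal_pos (Measure.measure_pos_of_nonempty_interior volume hK.2).ne'
    hK.1.2.1.measure_lt_top.ne

/-- A body lying metrically between two disjoint bodies is contained in one of them. -/
theorem subset_or_subset_of_DVol_add {n : ℕ} {K L M : Set (Euc n)}
    (hK : IsBodyN K) (hL : IsBodyN L) (hM : IsBodyN M) (hdisj : K ∩ L = ∅)
    (h : DVol K M + DVol M L = DVol K L) : M ⊆ K ∨ M ⊆ L := by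
  obtain ⟨⟨-, hKc, -⟩, -⟩ := hK
  obtain ⟨⟨-, hLc, -⟩, -⟩ := hL
  obtain ⟨⟨-, hMc, hMconv⟩, hMint⟩ := hM
  have hunion : volume.real (M ∩ (K ∪ L)) = volume.real (M ∩ K) + volume.real (M ∩ L) := by
    rw [Set.inter_union_distrib_left]
    refine measureReal_union ?_ (hMc.inter hLc).measurableSet
      (hMc.inter hKc).measure_lt_top.ne (hMc.inter hLc).measure_lt_top.ne
    exact (Set.disjoint_iff_inter_eq_empty.2 hdisj).mono Set.inter_subset_right
      Set.inter_subset_right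
  have hsplit := measureReal_inter_add_sdiff (μ := volume) (s := M)
    (hKc.union hLc).measurableSet hMc.measure_lt_top.ne
  have hzero : volume.real (M \ (K ∪ L)) = 0 := by
    simp only [DVol, hdisj, measure_empty, ENNReal.toReal_zero, Set.inter_comm K M] at h
    simp only [measureReal_def] at hunion hsplit ⊢
    linarith
  have hnull : volume (M \ (K ∪ L)) = 0 :=
    (measureReal_eq_zero_iff (measure_ne_top_of_subset Set.sdiff_subset hMc.measure_lt_top.ne)).1
      hzero
  have hempty : interior M \ (K ∪ L) = ∅ := by
    refine (isOpen_interior.sdiff (hKc.union hLc).isClosed).measure_eq_zero_iff volume |>.1 ?_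
    exact measure_mono_null (Set.sdiff_subset_sdiff_left interior_subset) hnull
  have hMeq : closure (interior M) = M := by
    rw [hMconv.closure_interior_eq_closure_of_nonempty_interior hMint, hMc.isClosed.closure_eq]
  rw [← hMeq]
  refine ((isPreconnected_iff_subset_of_disjoint_closed.1 hMconv.interior.isPreconnected)
    K L hKc.isClosed hLc.isClosed (Set.sdiff_eq_empty.1 hempty) (by simp [hdisj])).imp ?_ ?_
  · exact fun hsub => closure_minimal hsub hKc.isClosed
  · exact fun hsub => closure_minimal hsub hLc.isClosed

/-- Disjoint full-dimensional convex bodies `K, L` are joined by no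
shortest path for `Δ_Vol`; in particular `(K^n_n, Δ_Vol)` is not a geodesic space. -/
theorem no_shortest_path_of_disjoint (n : ℕ) (K L : Set (Euc n))
    (hK : IsBodyN K) (hL : IsBodyN L) (hdisj : K ∩ L = ∅) :
    ¬ ∃ γ : ℝ → Set (Euc n), IsShortestDVolPath K L γ := by
  rintro ⟨γ, hbody, h0, h1, hcont, hpart⟩
  -- The partition `0 < t < 1` already forces every body on the path into `K` or into `L`.
  have hside : ∀ t ∈ Set.Icc (0:ℝ) 1, γ t ⊆ K ∨ γ t ⊆ L := by
    intro t ht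
    rcases ht.1.eq_or_lt with rfl | ht0
    · exact Or.inl h0.subset
    rcases ht.2.eq_or_lt with rfl | ht1
    · exact Or.inr h1.subset
    apply subset_or_subset_of_DVol_add hK hL (hbody t ht) hdisj
    have h := hpart 2 (fun i => if i = 0 then 0 else if i = 1 then t else 1)
      (by norm_num) (by simp) (by simp)
      (by intro i hi; interval_cases i <;> simp [ht0, ht1])
      (by intro i hi; interval_cases i <;> simp [ht.1, ht.2])
    simpa [Finset.sum_range_succ, h0, h1] using h
  classical
  have hf : ContinuousOn (fun t => decide (γ t ⊆ K)) (Set.Icc (0:ℝ) 1) := by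
    intro t ht
    -- Bodies on different sides are at distance at least the volume of either of them.
    obtain ⟨δ, hδ, hnear⟩ := hcont t ht _ (volume_toReal_pos (hbody t ht))
    refine ContinuousWithinAt.congr_of_eventuallyEq
      (continuousWithinAt_const (b := decide (γ t ⊆ K))) ?_ rfl
    filter_upwards [self_mem_nhdsWithin, mem_nhdsWithin_of_mem_nhds (Metric.ball_mem_nhds t hδ)]
      with s hs hst
    have hlt := hnear s hs (by simpa [Real.dist_eq] using hst)
    have hmeet : (γ s ∩ γ t).Nonempty := by
      by_contra hne
      rw [Set.not_nonempty_iff_eq_empty] at hne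
      have hpos := volume_toReal_pos (hbody s hs)
      simp only [DVol, hne, measure_empty, ENNReal.toReal_zero] at hlt
      linarith
    obtain ⟨x, hxs, hxt⟩ := hmeet
    have hnot : ∀ y, y ∈ K → y ∈ L → False := fun y hyK hyL => by
      have : y ∈ K ∩ L := ⟨hyK, hyL⟩
      simp [hdisj] at this
    rw [decide_eq_decide]
    constructor
    · intro hsK
      exact (hside t ht).resolve_right fun htL => hnot x (hsK hxs) (htL hxt)
    · intro htK
      exact (hside s hs).resolve_right fun hsL => hnot x (htK hxt) (hsL hxs)
  have heq := isPreconnected_Icc.constant hf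
    (Set.left_mem_Icc.2 zero_le_one) (Set.right_mem_Icc.2 zero_le_one)
  simp only [h0, h1, subset_refl, decide_true] at heq
  have hLK : L ⊆ K := of_decide_eq_true heq.symm
  obtain ⟨x, hx⟩ := hL.1.1
  have : x ∈ K ∩ L := ⟨hLK hx, hx⟩
  simp [hdisj] at this
end
end
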